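/- Let n ≥ 1 and let λ = (1^{m₁} 2^{m₂} ⋯ n^{m_n}) be a partition of n (so Σ_i i·m_i = n). For integers i ≥ 1 and k ≥ 0, define g_{i,k} = (1/(2i)) Σ_{d ∣ i, d odd} μ(d) (2k)^{i/d}, a nonnegative integer, and for integers g, m ≥ 0 let N(g,m) denote the coefficient of u^m in the formal power series (1+u)^g (1−u)^{−g} ∈ ℚ[[u]]. Then the following identity of formal power series in ℚ[[t]] holds: (1/2) Σ_{π ∈ S_n, cycle type(π) = λ} 4^{pk(π)+1} t^{pk(π)+1} (1+t)^{n−1−2·pk(π)} = (1−t)^{n+1} · Σ_{k ≥ 0} t^k · Π_{1 ≤ i ≤ n, m_i ≥ 1} N(g_{i,k}, m_i). (This is the Diaconis–Fulman–Holmes formula (1/2)((1+t)/(1−t))^{n+1} Σ_{π: cycle type λ} (4t/(1+t)²)^{pk(π)+1} = Σ_{k≥0} t^k Π_i N(g_{i,k}, m_i) with denominators cleared; note 2·pk(π) ≤ n−1 for every π ∈ S_n.) -/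

import Mathlib

open scoped Classical

noncomputable section

def oneLine (n : ℕ) (π : Equiv.Perm (Fin n)) (i : ℕ) : ℕ :=
  if h : 1 ≤ i ∧ i ≤ n then (π ⟨i - 1, by omega⟩).val + 1 else 0

def des (n : ℕ) (π : Equiv.Perm (Fin n)) : ℕ :=
  ((Finset.Icc 1 (n - 1)).filter fun i => oneLine n π (i + 1) < oneLine n π i).card

def pk (n : ℕ) (π : Equiv.Perm (Fin n)) : ℕ :=
  ((Finset.Icc 2 (n - 1)).filter fun i =>
    oneLine n π (i - 1) < oneLine n π i ∧ oneLine n π (i + 1) < oneLine n π i).card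

def lpk (n : ℕ) (π : Equiv.Perm (Fin n)) : ℕ :=
  ((Finset.Icc 1 (n - 1)).filter fun i =>
    oneLine n π (i - 1) < oneLine n π i ∧ oneLine n π (i + 1) < oneLine n π i).card

def pval (n : ℕ) (π : Equiv.Perm (Fin n)) : ℕ :=
  ((Finset.Icc 2 (n - 1)).filter fun i =>
    oneLine n π i < oneLine n π (i - 1) ∧ oneLine n π i < oneLine n π (i + 1)).card

def udr (n : ℕ) (π : Equiv.Perm (Fin n)) : ℕ := lpk n π + pval n π + 1

def fullCycleType (n : ℕ) (π : Equiv.Perm (Fin n)) : Multiset ℕ :=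
  π.cycleType + Multiset.replicate (n - π.support.card) 1

def numCycles (n : ℕ) (π : Equiv.Perm (Fin n)) : ℕ := Multiset.card (fullCycleType n π)

def numOddCycles (n : ℕ) (π : Equiv.Perm (Fin n)) : ℕ :=
  Multiset.card ((fullCycleType n π).filter fun p => p % 2 = 1)

def IsCyclicPerm (n : ℕ) (π : Equiv.Perm (Fin n)) : Prop :=
  fullCycleType n π = {n}

def cyclicSet (n : ℕ) : Finset (Equiv.Perm (Fin n)) :=
  Finset.univ.filter fun π => IsCyclicPerm n π

def invSet (n : ℕ) : Finset (Equiv.Perm (Fin n)) :=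
  Finset.univ.filter fun π => π ^ 2 = 1

def eulerianA (m : ℕ) : Polynomial ℚ :=
  ∑ π : Equiv.Perm (Fin m), Polynomial.X ^ (des m π + 1)

def peakP (m : ℕ) : Polynomial ℚ :=
  ∑ π : Equiv.Perm (Fin m), Polynomial.X ^ (pk m π + 1)

def leftPeakP (m : ℕ) : Polynomial ℚ :=
  ∑ π : Equiv.Perm (Fin m), Polynomial.X ^ (lpk m π)

def cnk (n k : ℕ) : ℕ :=
  (Finset.univ.filter fun π : Equiv.Perm (Fin n) =>
    (∀ p ∈ fullCycleType n π, ¬ (4 ∣ p)) ∧ numCycles n (π ^ 2) = k).card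

def bnk (n k : ℕ) : ℕ :=
  (Finset.univ.filter fun π : Equiv.Perm (Fin n) => numCycles n (π ^ 2) = k).card

def dnk (n k : ℕ) : ℕ :=
  (Finset.univ.filter fun π : Equiv.Perm (Fin n) => numOddCycles n (π ^ 2) = k).card

/-- `N g m` is the coefficient of `u^m` in `(1+u)^g (1-u)^{-g}`. -/
def Ncoef (g m : ℕ) : ℚ :=
  PowerSeries.coeff (R := ℚ) m
    ((1 + PowerSeries.X) ^ g * ((1 - PowerSeries.X : PowerSeries ℚ)⁻¹) ^ g)



namespace DFH
open PowerSeries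

def stepR (d : Prop) (b c : ℕ) : Prop := b < c ∨ (b = c ∧ (d ↔ Even c))

def cnt (D : ℕ → Prop) : ℕ → ℕ → ℕ
  | 0, _ => 1
  | j + 1, c => ∑ b ∈ Finset.range (c + 1), if stepR (D j) b c then cnt D j b else 0

def pkc (D : ℕ → Prop) : ℕ → ℕ
  | 0 => 0
  | j + 1 => pkc D j + (if 1 ≤ j ∧ ¬ D (j - 1) ∧ D j then 1 else 0)

def US (D : ℕ → Prop) (j : ℕ) : PowerSeries ℚ := mk fun v => (cnt D j (2 * v) : ℚ)
def VS (D : ℕ → Prop) (j : ℕ) : PowerSeries ℚ := mk fun v => (cnt D j (2 * v + 1) : ℚ)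

lemma one_sub_mul_mk_sum (f : ℕ → ℚ) :
    (1 - X : PowerSeries ℚ) * mk (fun v => ∑ u ∈ Finset.range (v + 1), f u) = mk f := by
  ext v
  rw [sub_mul, one_mul, map_sub]
  cases v with
  | zero => simp
  | succ v => simp [coeff_succ_X_mul, Finset.sum_range_succ _ (v + 1)]

lemma one_sub_mul_mk_sum' (f : ℕ → ℚ) :
    (1 - X : PowerSeries ℚ) * mk (fun v => ∑ u ∈ Finset.range v, f u) = X * mk f := by
  ext v
  rw [sub_mul, one_mul, map_sub]
  cases v with
  | zero => simp
  | succ v => simp [coeff_succ_X_mul, Finset.sum_range_succ]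

lemma sum_range_even (f : ℕ → ℕ) (v : ℕ) :
    ∑ b ∈ Finset.range (2 * v), f b = ∑ u ∈ Finset.range v, (f (2 * u) + f (2 * u + 1)) := by
  induction v with
  | zero => simp
  | succ v ih =>
    rw [Finset.sum_range_succ, ← ih, Nat.mul_succ, Finset.sum_range_succ, Finset.sum_range_succ]
    ring

lemma cnt_strict (D : ℕ → Prop) (j c : ℕ) (h : ¬ (D j ↔ Even c)) :
    cnt D (j + 1) c = ∑ b ∈ Finset.range c, cnt D j b := by
  rw [cnt, Finset.sum_range_succ]
  have : ¬ stepR (D j) c c := by simp [stepR, h]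
  rw [if_neg this, add_zero]
  apply Finset.sum_congr rfl
  intro b hb
  rw [if_pos (show stepR (D j) b c from Or.inl (Finset.mem_range.1 hb))]

lemma cnt_weak (D : ℕ → Prop) (j c : ℕ) (h : (D j ↔ Even c)) :
    cnt D (j + 1) c = ∑ b ∈ Finset.range (c + 1), cnt D j b := by
  rw [cnt]
  apply Finset.sum_congr rfl
  intro b hb
  rw [if_pos]
  rcases (Nat.lt_succ_iff.1 (Finset.mem_range.1 hb)).lt_or_eq with h1 | h1
  · exact Or.inl h1
  · exact Or.inr ⟨h1, h⟩

lemma VS_asc (D : ℕ → Prop) (j : ℕ) (h : ¬ D j) : (1 - X) * VS D (j + 1) = US D j + VS D j := by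
  have : VS D (j + 1) = mk (fun v => ∑ u ∈ Finset.range (v + 1),
      ((cnt D j (2 * u) : ℚ) + (cnt D j (2 * u + 1) : ℚ))) := by
    ext v
    simp only [VS, coeff_mk]
    rw [cnt_weak D j _ (by simp [h]), show 2 * v + 1 + 1 = 2 * (v + 1) by ring, sum_range_even]
    push_cast; rfl
  rw [this, one_sub_mul_mk_sum]
  ext v; simp [US, VS]

lemma US_asc (D : ℕ → Prop) (j : ℕ) (h : ¬ D j) :
    (1 - X) * US D (j + 1) = X * (US D j + VS D j) := by
  have : US D (j + 1) = mk (fun v => ∑ u ∈ Finset.range v,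
      ((cnt D j (2 * u) : ℚ) + (cnt D j (2 * u + 1) : ℚ))) := by
    ext v
    simp only [US, coeff_mk]
    rw [cnt_strict D j _ (by simp [h]), sum_range_even]
    push_cast; rfl
  rw [this, one_sub_mul_mk_sum']
  rfl

lemma cnt_desc (D : ℕ → Prop) (j : ℕ) (h : D j) (v : ℕ) :
    cnt D (j + 1) (2 * v) = cnt D (j + 1) (2 * v + 1) := by
  rw [cnt_weak D j (2 * v) (by simp [h]), cnt_strict D j (2 * v + 1) (by simp [h])]

lemma UV_desc (D : ℕ → Prop) (j : ℕ) (h : D j) : US D (j + 1) = VS D (j + 1) := by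
  ext v; simp [US, VS, cnt_desc D j h]

lemma VS_desc (D : ℕ → Prop) (j : ℕ) (h : D j) :
    (1 - X) * VS D (j + 1) = US D j + X * VS D j := by
  have : VS D (j + 1) = mk (fun v => ∑ u ∈ Finset.range (v + 1), (cnt D j (2 * u) : ℚ))
     + mk (fun v => ∑ u ∈ Finset.range v, (cnt D j (2 * u + 1) : ℚ)) := by
    ext v
    simp only [VS, coeff_mk, map_add]
    rw [cnt_strict D j _ (by simp [h]), Finset.sum_range_succ, sum_range_even,
      Finset.sum_add_distrib, Finset.sum_range_succ]
    push_cast; ring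
  rw [this, mul_add, one_sub_mul_mk_sum, one_sub_mul_mk_sum']
  rfl

lemma UV_closed (D : ℕ → Prop) (j : ℕ) :
    ((j = 0 ∨ D (j - 1)) → 2 * pkc D j ≤ j ∧ US D j = VS D j ∧
      (1 - X) ^ (j + 1) * VS D j = (4 * X) ^ (pkc D j) * (1 + X) ^ (j - 2 * pkc D j)) ∧
    ((1 ≤ j ∧ ¬ D (j - 1)) → 2 * pkc D j + 1 ≤ j ∧ US D j = X * VS D j ∧
      (1 - X) ^ (j + 1) * VS D j = 2 * (4 * X) ^ (pkc D j) * (1 + X) ^ (j - 1 - 2 * pkc D j)) := by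
  have hne : (1 - X : PowerSeries ℚ) ≠ 0 := by
    intro h
    have := congrArg (coeff 0) h
    simp at this
  induction j with
  | zero =>
    refine ⟨fun _ => ⟨by simp [pkc], rfl, ?_⟩, fun h => by omega⟩
    have : VS D 0 = mk (fun v => (1 : ℚ)) := by ext; simp [VS, cnt]
    have h2 := one_sub_mul_mk_sum (fun v => if v = 0 then 1 else 0)
    simp only [Finset.sum_ite_eq', Finset.mem_range, Nat.succ_pos, if_true] at h2
    rw [this, zero_add, pow_one, h2]
    ext v; simp [pkc, coeff_one]
  | succ j ih =>
    simp only [Nat.succ_ne_zero, false_or, Nat.add_sub_cancel]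
    refine ⟨fun hd => ?_, fun ⟨_, hd⟩ => ?_⟩
    · by_cases hj : j = 0 ∨ D (j - 1)
      · obtain ⟨h1, h2, h3⟩ := ih.1 hj
        have hp : pkc D (j + 1) = pkc D j := by
          rw [pkc, if_neg, add_zero]
          rintro ⟨h, h', _⟩
          rcases hj with hj | hj
          · omega
          · exact h' hj
        refine ⟨by omega, UV_desc D j hd, ?_⟩
        rw [pow_succ, mul_assoc, VS_desc D j hd, h2, hp, Nat.sub_add_comm h1, pow_succ (1 + X),
          ← mul_assoc, ← h3]
        ring
      · push Not at hj
        obtain ⟨h1, h2, h3⟩ := ih.2 ⟨by omega, hj.2⟩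
        have hp : pkc D (j + 1) = pkc D j + 1 := by
          rw [pkc, if_pos ⟨by omega, hj.2, hd⟩]
        refine ⟨by omega, UV_desc D j hd, ?_⟩
        rw [pow_succ, mul_assoc, VS_desc D j hd, h2, hp,
          show j + 1 - 2 * (pkc D j + 1) = j - 1 - 2 * pkc D j by omega]
        calc _ = 2 * X * ((1 - X) ^ (j + 1) * VS D j) := by ring
          _ = _ := by rw [h3]; ring
    · have hp : pkc D (j + 1) = pkc D j := by
        rw [pkc, if_neg, add_zero]
        tauto
      have hU : US D (j + 1) = X * VS D (j + 1) := by
        apply mul_left_cancel₀ hne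
        rw [US_asc D j hd, ← VS_asc D j hd]; ring
      by_cases hj : j = 0 ∨ D (j - 1)
      · obtain ⟨h1, h2, h3⟩ := ih.1 hj
        refine ⟨by omega, hU, ?_⟩
        rw [pow_succ, mul_assoc, VS_asc D j hd, h2, hp]
        calc _ = 2 * ((1 - X) ^ (j + 1) * VS D j) := by ring
          _ = _ := by rw [h3]; ring
      · push Not at hj
        obtain ⟨h1, h2, h3⟩ := ih.2 ⟨by omega, hj.2⟩
        refine ⟨by omega, hU, ?_⟩
        rw [pow_succ, mul_assoc, VS_asc D j hd, h2, hp]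
        calc _ = (1 + X) * ((1 - X) ^ (j + 1) * VS D j) := by ring
          _ = _ := by
            rw [h3, show j - 2 * pkc D j = j - 1 - 2 * pkc D j + 1 by omega]; ring

/-- Generating function of the enriched order polynomial. -/
lemma enriched_gf (D : ℕ → Prop) (j : ℕ) :
    (1 - X : PowerSeries ℚ) ^ (j + 2) *
      mk (fun k => ((∑ c ∈ Finset.range (2 * k), cnt D j c : ℕ) : ℚ)) =
    C (1 / 2 : ℚ) * (4 ^ (pkc D j + 1) * X ^ (pkc D j + 1) * (1 + X) ^ (j - 2 * pkc D j)) := by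
  have h0 : (1 - X : PowerSeries ℚ) *
      mk (fun k => ((∑ c ∈ Finset.range (2 * k), cnt D j c : ℕ) : ℚ)) = X * (US D j + VS D j) := by
    have : (mk (fun k => ((∑ c ∈ Finset.range (2 * k), cnt D j c : ℕ) : ℚ)) : PowerSeries ℚ) =
       mk (fun v => ∑ u ∈ Finset.range v,
      ((cnt D j (2 * u) : ℚ) + (cnt D j (2 * u + 1) : ℚ))) := by
      ext k
      rw [coeff_mk, coeff_mk, sum_range_even]; push_cast; rfl
    rw [this, one_sub_mul_mk_sum']
    rfl
  have hC : C (1 / 2 : ℚ) * 4 = (2 : PowerSeries ℚ) := by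
    have : (4 : PowerSeries ℚ) = C (4 : ℚ) := (map_ofNat C 4).symm
    rw [this, ← map_mul, show (1 / 2 * 4 : ℚ) = 2 by norm_num]
    exact map_ofNat C 2
  rw [pow_succ, mul_assoc, h0]
  by_cases hj : j = 0 ∨ D (j - 1)
  · obtain ⟨h1, h2, h3⟩ := (UV_closed D j).1 hj
    rw [h2]
    calc _ = 2 * X * ((1 - X) ^ (j + 1) * VS D j) := by ring
      _ = _ := by rw [h3, ← hC]; ring
  · push Not at hj
    obtain ⟨h1, h2, h3⟩ := (UV_closed D j).2 ⟨by omega, hj.2⟩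
    rw [h2, show j - 2 * pkc D j = j - 1 - 2 * pkc D j + 1 by omega]
    calc _ = (1 + X) * X * ((1 - X) ^ (j + 1) * VS D j) := by ring
      _ = _ := by rw [h3, ← hC]; ring

/-- Counting functions by their last value. -/
lemma card_last (D : ℕ → Prop) (K : ℕ) (m : ℕ) (c : Fin K) :
    ((Finset.univ : Finset (Fin (m + 1) → Fin K)).filter fun f => f (Fin.last m) = c ∧
      ∀ i : Fin m, stepR (D i) (f i.castSucc) (f i.succ)).card = cnt D m c := by
  induction m generalizing c with
  | zero =>
    rw [cnt, Finset.card_eq_one]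
    refine ⟨fun _ => c, ?_⟩
    ext f
    simp only [Finset.mem_filter, Finset.mem_univ, true_and, Finset.mem_singleton]
    constructor
    · rintro ⟨h, _⟩
      funext i
      rw [show i = Fin.last 0 from Fin.ext (by omega), h]
    · rintro rfl
      exact ⟨rfl, fun i => i.elim0⟩
  | succ m ih =>
    have key : ((Finset.univ : Finset (Fin (m + 1 + 1) → Fin K)).filter fun f =>
        f (Fin.last (m + 1)) = c ∧ ∀ i : Fin (m + 1), stepR (D i) (f i.castSucc) (f i.succ)).card
        = ∑ b : Fin K, if stepR (D m) b c then cnt D m b else 0 := by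
      rw [Finset.card_eq_sum_card_fiberwise (f := fun f => f (Fin.last m).castSucc)
        (t := Finset.univ) (by intro x _; simp)]
      apply Finset.sum_congr rfl
      intro b _
      rw [← ih b]
      split_ifs with hs
      · refine Finset.card_bij' (fun f _ => Fin.init f) (fun f _ => Fin.snoc f c) ?_ ?_ ?_ ?_
        · intro f hf
          simp only [Finset.mem_filter, Finset.mem_univ, true_and] at hf ⊢
          refine ⟨hf.2, fun i => ?_⟩
          have := hf.1.2 i.castSucc
          simpa [Fin.init] using this
        · intro f hf
          simp only [Finset.mem_filter, Finset.mem_univ, true_and] at hf ⊢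
          refine ⟨⟨by simp, fun i => ?_⟩, by simp [Fin.snoc_castSucc, hf.1]⟩
          refine Fin.lastCases ?_ (fun i => ?_) i
          · simp only [Fin.snoc_castSucc, Fin.succ_last, Fin.snoc_last, hf.1, Fin.val_last]
            exact hs
          · have := hf.2 i
            simpa only [Fin.snoc_castSucc, Fin.succ_castSucc, Fin.val_castSucc] using this
        · intro f hf
          simp only [Finset.mem_filter, Finset.mem_univ, true_and] at hf
          rw [← hf.1.1, Fin.snoc_init_self]
        · intro f hf
          simp
      · rw [Finset.card_eq_zero]
        ext f
        simp only [Finset.mem_filter, Finset.mem_univ, true_and, Finset.notMem_empty, iff_false]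
        rintro ⟨⟨h1, h2⟩, h3⟩
        apply hs
        have := h2 (Fin.last m)
        rw [h3, Fin.succ_last, h1] at this
        exact this
    rw [key, cnt, Finset.sum_fin_eq_sum_range]
    symm
    apply Finset.sum_subset_zero_on_sdiff
    · intro b hb
      simp only [Finset.mem_range] at *
      omega
    · intro b hb
      simp only [Finset.mem_sdiff, Finset.mem_range] at hb
      rw [dif_pos hb.1, if_neg]
      simp only [stepR]; omega
    · intro b hb
      simp only [Finset.mem_range] at hb
      rw [dif_pos (by omega)]

lemma card_adj (D : ℕ → Prop) (K : ℕ) (m : ℕ) :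
    ((Finset.univ : Finset (Fin (m + 1) → Fin K)).filter fun f =>
      ∀ i : Fin m, stepR (D i) (f i.castSucc) (f i.succ)).card = ∑ c ∈ Finset.range K, cnt D m c := by
  rw [Finset.card_eq_sum_card_fiberwise (f := fun f => f (Fin.last m))
        (t := Finset.univ) (by intro x _; simp), Finset.sum_range]
  apply Finset.sum_congr rfl
  intro c _
  rw [← card_last D K m c, Finset.filter_filter]
  congr 1
  ext f; simp [and_comm]

end DFH

namespace DFH
open PowerSeries

/-- Compatibility of a labelling with a permutation. -/
def Compat {n : ℕ} {A : Type*} [LinearOrder A] (neg : A → Prop) (π : Equiv.Perm (Fin n))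
    (f : Fin n → A) : Prop :=
  ∀ x y, x < y → f x < f y ∨
    (f x = f y ∧ (neg (f x) → π y < π x) ∧ (¬ neg (f x) → π x < π y))

lemma compat_iff_adj {m : ℕ} {A : Type*} [LinearOrder A] (neg : A → Prop)
    (π : Equiv.Perm (Fin (m + 1))) (f : Fin (m + 1) → A) :
    Compat neg π f ↔ ∀ i : Fin m, f i.castSucc < f i.succ ∨
      (f i.castSucc = f i.succ ∧ (neg (f i.castSucc) → π i.succ < π i.castSucc) ∧
        (¬ neg (f i.castSucc) → π i.castSucc < π i.succ)) := by
  let r : Fin (m + 1) → Fin (m + 1) → Prop := fun x y => f x < f y ∨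
    (f x = f y ∧ (neg (f x) → π y < π x) ∧ (¬ neg (f x) → π x < π y))
  haveI : IsTrans (Fin (m + 1)) r := ⟨by
    rintro a b c (h1 | ⟨h1, h1', h1''⟩) (h2 | ⟨h2, h2', h2''⟩)
    · exact Or.inl (h1.trans h2)
    · exact Or.inl (h2 ▸ h1)
    · exact Or.inl (h1 ▸ h2)
    · refine Or.inr ⟨h1.trans h2, fun h => ?_, fun h => ?_⟩
      · exact (h2' (h1 ▸ h)).trans (h1' h)
      · exact (h1'' h).trans (h2'' (h1 ▸ h))⟩
  have := Fin.liftFun_iff_succ r (f := id)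
  exact this

lemma oneLine_succ {m : ℕ} (π : Equiv.Perm (Fin (m + 1))) (j : ℕ) (h : j < m + 1) :
    oneLine (m + 1) π (j + 1) = (π ⟨j, h⟩).val + 1 := by
  unfold oneLine
  rw [dif_pos ⟨by omega, by omega⟩]
  rfl

def Dof (n : ℕ) (π : Equiv.Perm (Fin n)) (j : ℕ) : Prop :=
  oneLine n π (j + 2) < oneLine n π (j + 1)

lemma pkc_eq_card (D : ℕ → Prop) (m : ℕ) :
    pkc D m = ((Finset.Icc 2 m).filter fun i => ¬ D (i - 2) ∧ D (i - 1)).card := by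
  induction m with
  | zero => simp [pkc]
  | succ m ih =>
    rw [pkc, ih]
    by_cases hm : 1 ≤ m
    · rw [← Finset.insert_Icc_right_eq_Icc_add_one (by omega), Finset.filter_insert]
      simp only [hm, true_and, Nat.add_sub_cancel, show m + 1 - 2 = m - 1 by omega]
      split_ifs with h
      · rw [Finset.card_insert_of_notMem (by simp)]
      · rfl
    · have : m = 0 := by omega
      subst this
      simp

lemma pk_eq_pkc {m : ℕ} (π : Equiv.Perm (Fin (m + 1))) :
    pk (m + 1) π = pkc (Dof (m + 1) π) m := by
  rw [pkc_eq_card, pk, Nat.add_sub_cancel]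
  congr 1
  apply Finset.filter_congr
  intro i hi
  rw [Finset.mem_Icc] at hi
  obtain ⟨j, rfl⟩ : ∃ j, i = j + 2 := ⟨i - 2, by omega⟩
  simp only [Dof, Nat.add_sub_cancel, show j + 2 - 1 = j + 1 by omega, show j + 1 + 2 = j + 2 + 1 by omega,
    show j + 1 + 1 = j + 2 by omega]
  have hne : oneLine (m + 1) π (j + 1) ≠ oneLine (m + 1) π (j + 2) := by
    rw [oneLine_succ π j (by omega), oneLine_succ π (j + 1) (by omega)]
    intro h
    have := π.injective (Fin.ext (Nat.succ_injective h))
    simp at this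
  constructor
  · rintro ⟨h1, h2⟩; exact ⟨by omega, h2⟩
  · rintro ⟨h1, h2⟩; exact ⟨by omega, h2⟩

theorem partA (n : ℕ) (hn : 1 ≤ n) (π : Equiv.Perm (Fin n)) :
    C (1 / 2 : ℚ) * ((4 : PowerSeries ℚ) ^ (pk n π + 1) * X ^ (pk n π + 1)
              * (1 + X) ^ (n - 1 - 2 * pk n π)) =
    (1 - X : PowerSeries ℚ) ^ (n + 1) * mk (fun k =>
      (((Finset.univ : Finset (Fin n → Fin (2 * k))).filter fun f =>
        Compat (fun c => Even c.val) π f).card : ℚ)) := by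
  obtain ⟨m, rfl⟩ : ∃ m, n = m + 1 := ⟨n - 1, by omega⟩
  rw [pk_eq_pkc, Nat.add_sub_cancel, ← enriched_gf]
  congr 2
  ext k
  rw [← card_adj]
  congr 2
  apply Finset.filter_congr
  intro f _
  rw [compat_iff_adj]
  apply forall_congr'
  intro i
  have h1 : Dof (m + 1) π i ↔ π i.succ < π i.castSucc := by
    rw [Dof, oneLine_succ π i (by omega), oneLine_succ π (i + 1) (by omega), Fin.lt_def]
    simp only [add_lt_add_iff_right]
    rfl
  have h2 : ¬ Dof (m + 1) π i ↔ π i.castSucc < π i.succ := by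
    rw [h1, not_lt, le_iff_lt_or_eq]
    have : π i.castSucc ≠ π i.succ := fun h => by
      have := π.injective h
      simp [Fin.ext_iff] at this
    tauto
  rw [← h2, ← h1, stepR, ← Fin.lt_def, ← Fin.ext_iff]
  constructor
  · rintro (h | ⟨h, h'⟩)
    · exact Or.inl h
    · rw [← h] at h'
      exact Or.inr ⟨h, by tauto, by tauto⟩
  · rintro (h | ⟨h, h', h''⟩)
    · exact Or.inl h
    · rw [h] at h' h''
      exact Or.inr ⟨h, by tauto⟩

end DFH

namespace DFH

structure UnivSys {A Q : Type} [LinearOrder A] [LinearOrder Q] (neg : A → Prop)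
    (σ : Equiv.Perm Q) (a : Q → A) : Prop where
  compat : ∀ v w, v < w → a v < a w ∨
    (a v = a w ∧ (neg (a v) → σ w < σ v) ∧ (¬ neg (a v) → σ v < σ w))
  sep : ∀ v w, (∀ j : ℕ, a ((σ ^ j) v) = a ((σ ^ j) w)) → v = w

structure Good {A Q : Type} [LinearOrder A] [LinearOrder Q] (neg : A → Prop)
    (σ : Equiv.Perm Q) (a : Q → A) {n : ℕ} (π : Equiv.Perm (Fin n)) (W : Fin n → Q) : Prop where
  compat : Compat neg π (fun x => a (W x))
  equi : ∀ x, W (π x) = σ (W x)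

def fib {Q : Type} {n : ℕ} (W : Fin n → Q) (w : Q) : ℕ :=
  (Finset.univ.filter fun x => W x = w).card

section
variable {A Q : Type} [LinearOrder A] [LinearOrder Q] {neg : A → Prop}
    {σ : Equiv.Perm Q} {a : Q → A} {n : ℕ}

lemma mono_unique (W W' : Fin n → Q) (h : Monotone W) (h' : Monotone W')
    (hc : ∀ w, fib W w = fib W' w) : W = W' := by
  have hp : ∃ τ : Equiv.Perm (Fin n), W = W' ∘ τ := by
    have e : ∀ w, Nonempty ({x // W x = w} ≃ {x // W' x = w}) := by
      intro w
      apply Fintype.card_eq.1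
      have := hc w
      simp only [fib] at this
      rw [Fintype.card_subtype, Fintype.card_subtype]
      convert this
    let e := fun w => (e w).some
    refine ⟨(Equiv.sigmaFiberEquiv W).symm.trans ((Equiv.sigmaCongrRight fun w => e w).trans
      (Equiv.sigmaFiberEquiv W')), ?_⟩
    funext x
    simp only [Function.comp, Equiv.trans_apply]
    exact ((e (W x)) ⟨x, rfl⟩).2.symm
  obtain ⟨τ, rfl⟩ := hp
  exact Tuple.unique_monotone (f := W') (σ := τ) (τ := 1) h h'

lemma exists_mono [Fintype Q] (M : Q → ℕ) (hM : ∑ w, M w = n) :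
    ∃ W : Fin n → Q, Monotone W ∧ ∀ w, fib W w = M w := by
  have e : Fin n ≃ Σ w, Fin (M w) := by
    apply Fintype.equivOfCardEq
    simp [hM]
  let W0 : Fin n → Q := fun x => (e x).1
  refine ⟨W0 ∘ Tuple.sort W0, Tuple.monotone_sort W0, fun w => ?_⟩
  have h1 : fib (W0 ∘ Tuple.sort W0) w = Fintype.card {p : Σ w, Fin (M w) // p.1 = w} := by
    rw [fib, ← Fintype.card_subtype]
    apply Fintype.card_congr
    exact Equiv.subtypeEquiv ((Tuple.sort W0).trans e) (fun x => Iff.rfl)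
  rw [h1, Fintype.card_congr (Equiv.sigmaSubtype w), Fintype.card_fin]

lemma Good.mono (hU : UnivSys neg σ a) {π : Equiv.Perm (Fin n)} {W : Fin n → Q}
    (hG : Good neg σ a π W) : Monotone W := by
  have key : ∀ j : ℕ, ∀ x y, x < y → W y < W x → a ((σ ^ j) (W x)) = a ((σ ^ j) (W y)) := by
    intro j
    induction j with
    | zero =>
      intro x y hxy hW
      rcases hG.compat x y hxy with h | ⟨h, _⟩
      · rcases hU.compat _ _ hW with h' | ⟨h', _⟩
        · exact absurd h (not_lt.2 h'.le)
        · exact h'.symm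
      · exact h
    | succ j ih =>
      intro x y hxy hW
      have h1 : a (W x) = a (W y) ∧ (neg (a (W x)) → π y < π x) ∧ (¬ neg (a (W x)) → π x < π y) := by
        rcases hG.compat x y hxy with h | h
        · rcases hU.compat _ _ hW with h' | ⟨h', _⟩
          · exact absurd h (not_lt.2 h'.le)
          · exact absurd h (by simp [h'])
        · exact h
      have h2 : (neg (a (W y)) → σ (W x) < σ (W y)) ∧ (¬ neg (a (W y)) → σ (W y) < σ (W x)) := by
        rcases hU.compat _ _ hW with h' | ⟨_, h'⟩
        · exact absurd h1.1 h'.ne'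
        · exact h'
      rw [pow_succ, Equiv.Perm.mul_apply, Equiv.Perm.mul_apply, ← hG.equi, ← hG.equi]
      by_cases hn : neg (a (W x))
      · refine (ih (π y) (π x) (h1.2.1 hn) ?_).symm
        rw [hG.equi, hG.equi]; exact h2.1 (h1.1 ▸ hn)
      · refine (ih (π x) (π y) (h1.2.2 hn) ?_)
        rw [hG.equi, hG.equi]; exact h2.2 (h1.1 ▸ hn)
  intro x y hxy
  by_contra hlt
  rw [not_le] at hlt
  rcases hxy.lt_or_eq with h | h
  · have := hU.sep _ _ (fun j => key j x y h hlt)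
    rw [this] at hlt; exact lt_irrefl _ hlt
  · rw [h] at hlt; exact lt_irrefl _ hlt

lemma fib_inv {π : Equiv.Perm (Fin n)} {W : Fin n → Q} (h : ∀ x, W (π x) = σ (W x)) (w : Q) :
    fib W (σ w) = fib W w := by
  unfold fib
  symm
  apply Finset.card_bij (fun x _ => π x)
  · intro x hx; simp only [Finset.mem_filter, Finset.mem_univ, true_and] at *
    rw [h, hx]
  · intro x _ y _ hxy; exact π.injective hxy
  · intro y hy
    refine ⟨π.symm y, ?_, by simp⟩
    simp only [Finset.mem_filter, Finset.mem_univ, true_and] at *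
    apply σ.injective
    rw [← h, Equiv.apply_symm_apply, hy]

lemma strictMono_perm_eq_one (ρ : Equiv.Perm (Fin n)) (h : StrictMono ρ) : ρ = 1 := by
  have := Subsingleton.elim (StrictMono.orderIsoOfSurjective ρ h ρ.surjective) (OrderIso.refl _)
  ext x
  have := congrArg (fun e => e x) this
  simpa using congrArg Fin.val this

lemma Good.unique (hU : UnivSys neg σ a) {π π' : Equiv.Perm (Fin n)} {W : Fin n → Q}
    (hG : Good neg σ a π W) (hG' : Good neg σ a π' W) : π = π' := by
  have hm := hG.mono hU
  have : π' * π⁻¹ = 1 := by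
    apply strictMono_perm_eq_one
    have hstep : ∀ u v, π u < π v → π' u < π' v := by
      intro u v huv
      have hW := hm huv.le
      rw [hG.equi, hG.equi] at hW
      rcases hW.lt_or_eq with hlt | heq
      · rw [← hG'.equi, ← hG'.equi] at hlt
        by_contra hcon
        exact absurd hlt (not_lt.2 (hm (not_lt.1 hcon)))
      · have heq := σ.injective heq
        have hne : u ≠ v := fun h => by simp [h] at huv
        rcases lt_or_gt_of_ne hne with h | h
        · rcases hG.compat u v h with h1 | ⟨_, h1, h2⟩
          · simp [heq] at h1
          · rcases hG'.compat u v h with h1' | ⟨_, h1', h2'⟩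
            · simp [heq] at h1'
            · apply h2'
              intro hn
              exact absurd huv (h1 hn).asymm
        · rcases hG.compat v u h with h1 | ⟨_, h1, h2⟩
          · simp [heq] at h1
          · rcases hG'.compat v u h with h1' | ⟨_, h1', h2'⟩
            · simp [heq] at h1'
            · apply h1'
              by_contra hn
              exact absurd huv (h2 hn).asymm
    intro x y hxy
    simp only [Equiv.Perm.mul_apply]
    apply hstep
    simpa using hxy
  exact (mul_inv_eq_one.1 this).symm

lemma Good.exists (hU : UnivSys neg σ a) (W : Fin n → Q) (hW : Monotone W)
    (hinv : ∀ w, fib W (σ w) = fib W w) : ∃ π, Good neg σ a π W := by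
  let κ : Fin n → Q ×ₗ ℤ := fun x => toLex (σ (W x), if neg (a (W x)) then -(x.val : ℤ) else x.val)
  have hκ : Function.Injective κ := by
    intro x y h
    have h := toLex_inj.1 h
    rw [Prod.mk.injEq] at h
    obtain ⟨h1, h2⟩ := h
    have h1 := σ.injective h1
    rw [h1] at h2
    ext
    split_ifs at h2 <;> omega
  let τ := Tuple.sort κ
  have hτ : StrictMono (κ ∘ τ) := (Tuple.monotone_sort κ).strictMono_of_injective
    (hκ.comp τ.injective)
  have hlt : ∀ x y, κ x < κ y → τ⁻¹ x < τ⁻¹ y := by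
    intro x y h
    rw [← hτ.lt_iff_lt]
    simpa using h
  have heq : (fun x => σ (W (τ x))) = W := by
    apply mono_unique _ _ _ hW
    · intro w
      rw [← σ.apply_symm_apply w, hinv]
      unfold fib
      apply Finset.card_bij (fun x _ => τ x)
      · intro x hx; simpa [Equiv.eq_symm_apply] using hx
      · intro x _ y _ hxy; exact τ.injective hxy
      · intro y hy
        refine ⟨τ.symm y, ?_, by simp⟩
        simpa [Equiv.eq_symm_apply] using hy
    · intro x y hxy
      have := hτ.monotone hxy
      simp only [Function.comp, κ] at this
      rw [Prod.Lex.toLex_le_toLex] at this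
      rcases this with h | h
      · exact h.le
      · exact h.1.le
  have hequi : ∀ x, W (τ⁻¹ x) = σ (W x) := by
    intro x
    have := congrFun heq (τ⁻¹ x)
    rw [← this]; simp
  refine ⟨τ⁻¹, ?_, hequi⟩
  intro x y hxy
  rcases (hW hxy.le).lt_or_eq with h | h
  · rcases hU.compat _ _ h with h' | ⟨h', h1, h2⟩
    · exact Or.inl h'
    · refine Or.inr ⟨h', fun hn => ?_, fun hn => ?_⟩
      · apply hlt
        exact Prod.Lex.toLex_lt_toLex.2 (Or.inl (h1 hn))
      · apply hlt
        exact Prod.Lex.toLex_lt_toLex.2 (Or.inl (h2 hn))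
  · refine Or.inr ⟨by simp only [h], fun hn => ?_, fun hn => ?_⟩
    · apply hlt
      refine Prod.Lex.toLex_lt_toLex.2 (Or.inr ⟨by simp only [h], ?_⟩)
      have hn' : neg (a (W y)) := h ▸ hn
      have hn : neg (a (W x)) := hn
      simp only [if_pos hn, if_pos hn']
      have := Fin.lt_def.1 hxy
      omega
    · apply hlt
      refine Prod.Lex.toLex_lt_toLex.2 (Or.inr ⟨by simp only [h], ?_⟩)
      have hn' : ¬ neg (a (W y)) := h ▸ hn
      have hn : ¬ neg (a (W x)) := hn
      simp only [if_neg hn, if_neg hn']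
      have := Fin.lt_def.1 hxy
      omega

end

end DFH

namespace DFH
open Function

def negc {A Q : Type} (neg : A → Prop) (σ : Equiv.Perm Q) (a : Q → A) (j : ℕ) (w : Q) : ℕ :=
  ((Finset.range j).filter fun i => neg (a ((σ ^ i) w))).card

def oddw {A Q : Type} (neg : A → Prop) (σ : Equiv.Perm Q) (a : Q → A) (w : Q) : Prop :=
  Odd (negc neg σ a (minimalPeriod σ w) w)

def contrib (p M i : ℕ) (o : Prop) : ℕ :=
  if o then (if p = i then M % 2 else 0) + (if 2 * p = i then 2 * (M / 2) else 0)
  else if p = i then M else 0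

lemma negc_succ {A Q : Type} (neg : A → Prop) (σ : Equiv.Perm Q) (a : Q → A) (j : ℕ) (w : Q) :
    negc neg σ a (j + 1) w = negc neg σ a j w + if neg (a ((σ ^ j) w)) then 1 else 0 := by
  unfold negc
  rw [Finset.range_add_one, Finset.filter_insert]
  split_ifs with h
  · rw [Finset.card_insert_of_notMem (by simp)]
  · rfl

lemma mono_fix {n : ℕ} (s : Finset (Fin n)) (ρ : Fin n → Fin n) (hs : ∀ x ∈ s, ρ x ∈ s)
    (hm : ∀ x ∈ s, ∀ y ∈ s, x < y → ρ x < ρ y) : ∀ x ∈ s, ρ x = x := by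
  have h1 : ∀ x ∈ s, ¬ x < ρ x := by
    by_contra hcon
    push Not at hcon
    obtain ⟨x, hx, hlt⟩ := hcon
    have hne : (s.filter fun x => x < ρ x).Nonempty := ⟨x, by simp [hx, hlt]⟩
    obtain ⟨y, hy, hmax⟩ := Finset.exists_max_image _ id hne
    rw [Finset.mem_filter] at hy
    have := hmax (ρ y) (by
      rw [Finset.mem_filter]
      exact ⟨hs y hy.1, hm y hy.1 _ (hs y hy.1) hy.2⟩)
    exact absurd hy.2 (not_lt.2 this)
  have h2 : ∀ x ∈ s, ¬ ρ x < x := by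
    by_contra hcon
    push Not at hcon
    obtain ⟨x, hx, hlt⟩ := hcon
    have hne : (s.filter fun x => ρ x < x).Nonempty := ⟨x, by simp [hx, hlt]⟩
    obtain ⟨y, hy, hmin⟩ := Finset.exists_min_image _ id hne
    rw [Finset.mem_filter] at hy
    have := hmin (ρ y) (by
      rw [Finset.mem_filter]
      exact ⟨hs y hy.1, hm _ (hs y hy.1) y hy.1 hy.2⟩)
    exact absurd hy.2 (not_lt.2 this)
  intro x hx
  exact le_antisymm (not_lt.1 (h1 x hx)) (not_lt.1 (h2 x hx))

lemma anti_fix {n : ℕ} (s : Finset (Fin n)) (ρ : Fin n → Fin n) (hs : ∀ x ∈ s, ρ x ∈ s)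
    (hm : ∀ x ∈ s, ∀ y ∈ s, x < y → ρ y < ρ x) :
    (∀ x ∈ s, ρ (ρ x) = x) ∧ (s.filter fun x => ρ x = x).card = s.card % 2 := by
  have hinv : ∀ x ∈ s, ρ (ρ x) = x := by
    apply mono_fix s (fun x => ρ (ρ x)) (fun x hx => hs _ (hs _ hx))
    intro x hx y hy hxy
    exact hm _ (hs y hy) _ (hs x hx) (hm x hx y hy hxy)
  refine ⟨hinv, ?_⟩
  have hle : (s.filter fun x => ρ x = x).card ≤ 1 := by
    rw [Finset.card_le_one]
    intro x hx y hy
    rw [Finset.mem_filter] at hx hy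
    by_contra hne
    rcases lt_or_gt_of_ne hne with h | h
    · have := hm x hx.1 y hy.1 h
      rw [hx.2, hy.2] at this
      exact absurd h this.asymm
    · have := hm y hy.1 x hx.1 h
      rw [hx.2, hy.2] at this
      exact absurd h this.asymm
  have hpar : ((s.filter fun x => ¬ ρ x = x).card : ZMod 2) = 0 := by
    rw [Finset.cast_card]
    apply Finset.sum_involution (fun x _ => ρ x)
    · intro x _; decide
    · intro x hx _; exact (Finset.mem_filter.1 hx).2
    · intro x hx
      rw [Finset.mem_filter] at hx ⊢
      refine ⟨hs x hx.1, fun h => hx.2 ?_⟩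
      rw [hinv x hx.1] at h; exact h.symm
    · intro x hx; exact hinv x (Finset.mem_filter.1 hx).1
  rw [ZMod.natCast_eq_zero_iff] at hpar
  have := Finset.card_filter_add_card_filter_not (s := s) (fun x => ρ x = x)
  omega

section
variable {A Q : Type} [LinearOrder A] [LinearOrder Q] {neg : A → Prop}
    {σ : Equiv.Perm Q} {a : Q → A} {n : ℕ}

lemma Good.equi_pow {π : Equiv.Perm (Fin n)} {W : Fin n → Q}
    (hG : Good neg σ a π W) (j : ℕ) (x : Fin n) : W ((π ^ j) x) = (σ ^ j) (W x) := by
  induction j with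
  | zero => rfl
  | succ j ih => rw [pow_succ', pow_succ', Equiv.Perm.mul_apply, Equiv.Perm.mul_apply, hG.equi, ih]

lemma Good.order_iter {π : Equiv.Perm (Fin n)} {W : Fin n → Q}
    (hG : Good neg σ a π W) (x y : Fin n) (hxy : x < y) (hW : W x = W y) (j : ℕ) :
    (Even (negc neg σ a j (W x)) → (π ^ j) x < (π ^ j) y) ∧
    (¬ Even (negc neg σ a j (W x)) → (π ^ j) y < (π ^ j) x) := by
  have step : ∀ x y, x < y → W x = W y → (neg (a (W x)) → π y < π x) ∧
      (¬ neg (a (W x)) → π x < π y) := by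
    intro x y hxy hW
    rcases hG.compat x y hxy with h | ⟨_, h⟩
    · simp [hW] at h
    · exact h
  induction j with
  | zero => simp [negc, hxy]
  | succ j ih =>
    rw [negc_succ, pow_succ', Equiv.Perm.mul_apply, Equiv.Perm.mul_apply]
    have e1 := hG.equi_pow j x
    have e2 := hG.equi_pow j y
    rw [← hW] at e2
    by_cases hE : Even (negc neg σ a j (W x))
    · have := step _ _ (ih.1 hE) (by rw [e1, e2])
      rw [e1] at this
      split_ifs with h
      · simp only [Nat.even_add_one, hE]
        simpa using this.1 h
      · simp only [add_zero, hE]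
        simpa using this.2 h
    · have := step _ _ (ih.2 hE) (by rw [e1, e2])
      rw [e2] at this
      split_ifs with h
      · simp only [Nat.even_add_one, hE]
        simpa using this.1 h
      · simp only [add_zero, hE]
        simpa using this.2 h

lemma perm_isPeriodicPt {α : Type} (π : Equiv.Perm α) (j : ℕ) (x : α) :
    IsPeriodicPt π j x ↔ (π ^ j) x = x := by
  rw [IsPeriodicPt, IsFixedPt, Equiv.Perm.iterate_eq_pow]

lemma Good.per_dvd {π : Equiv.Perm (Fin n)} {W : Fin n → Q}
    (hG : Good neg σ a π W) (x : Fin n) : minimalPeriod σ (W x) ∣ minimalPeriod π x := by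
  apply IsPeriodicPt.minimalPeriod_dvd
  rw [perm_isPeriodicPt, ← hG.equi_pow]
  congr 1
  rw [← perm_isPeriodicPt]
  exact isPeriodicPt_minimalPeriod _ _

lemma Good.fiber_count [Finite Q] {π : Equiv.Perm (Fin n)} {W : Fin n → Q}
    (hG : Good neg σ a π W) (w : Q) (i : ℕ) :
    (Finset.univ.filter fun x => W x = w ∧ minimalPeriod π x = i).card =
      contrib (minimalPeriod σ w) (fib W w) i (oddw neg σ a w) := by
  set p := minimalPeriod σ w with hp
  have hp0 : 0 < p := by
    apply minimalPeriod_pos_of_mem_periodicPts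
    exact mem_periodicPts.2 ⟨_, orderOf_pos σ, by
      rw [perm_isPeriodicPt, pow_orderOf_eq_one]; rfl⟩
  let s : Finset (Fin n) := Finset.univ.filter fun x => W x = w
  have hmem : ∀ x, x ∈ s ↔ W x = w := fun x => by simp [s]
  have hs : ∀ x ∈ s, (π ^ p) x ∈ s := by
    intro x hx
    rw [hmem] at *
    rw [hG.equi_pow, hx, ← perm_isPeriodicPt]
    exact isPeriodicPt_minimalPeriod _ _
  have hdvd : ∀ x ∈ s, p ∣ minimalPeriod π x := by
    intro x hx
    have := hG.per_dvd x
    rwa [(hmem x).1 hx] at this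
  have hsplit : (Finset.univ.filter fun x => W x = w ∧ minimalPeriod π x = i) =
      s.filter fun x => minimalPeriod π x = i := by
    ext x; simp [s]
  have hcard : s.card = fib W w := by
    unfold fib
    congr!
  rw [hsplit, contrib]
  by_cases ho : oddw neg σ a w
  · rw [if_pos ho]
    have ho' : ¬ Even (negc neg σ a p w) := Nat.not_even_iff_odd.2 ho
    obtain ⟨h1, h2⟩ := anti_fix s (fun x => (π ^ p) x) hs (fun x hx y hy hxy => by
      have := hG.order_iter x y hxy (((hmem x).1 hx).trans ((hmem y).1 hy).symm) p
      rw [(hmem x).1 hx] at this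
      exact this.2 ho')
    have hper : ∀ x ∈ s, minimalPeriod π x = if (π ^ p) x = x then p else 2 * p := by
      intro x hx
      split_ifs with h
      · exact Nat.dvd_antisymm (IsPeriodicPt.minimalPeriod_dvd ((perm_isPeriodicPt _ _ _).2 h))
          (hdvd x hx)
      · obtain ⟨d, hd⟩ := hdvd x hx
        have h2p : minimalPeriod π x ∣ 2 * p := by
          apply IsPeriodicPt.minimalPeriod_dvd
          rw [perm_isPeriodicPt, two_mul, pow_add, Equiv.Perm.mul_apply]
          exact h1 x hx
        rw [hd, mul_comm 2 p] at h2p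
        have hd2 := Nat.dvd_of_mul_dvd_mul_left hp0 h2p
        rcases (Nat.dvd_prime Nat.prime_two).1 hd2 with h' | h'
        · exfalso; apply h
          rw [← perm_isPeriodicPt]
          rw [h', mul_one] at hd
          rw [← hd]; exact isPeriodicPt_minimalPeriod _ _
        · rw [hd, h', mul_comm]
    have hfc : (s.filter fun x => minimalPeriod π x = i) =
        s.filter fun x => (if (π ^ p) x = x then p else 2 * p) = i := by
      apply Finset.filter_congr
      intro x hx
      rw [hper x hx]
    rw [hfc]
    have hadd := Finset.card_filter_add_card_filter_not (s := s) (fun x => (π ^ p) x = x)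
    rw [h2, hcard] at hadd
    rw [hcard] at h2
    by_cases hpi : p = i
    · rw [if_pos hpi, if_neg (by omega), add_zero, ← h2]
      congr 1
      apply Finset.filter_congr
      intro x _
      split_ifs with h <;> simp [h] <;> omega
    · rw [if_neg hpi, zero_add]
      by_cases hpi2 : 2 * p = i
      · rw [if_pos hpi2]
        have : (s.filter fun x => (if (π ^ p) x = x then p else 2 * p) = i) =
          s.filter fun x => ¬ (π ^ p) x = x := by
          apply Finset.filter_congr
          intro x _
          split_ifs with h <;> simp [h] <;> omega
        rw [this]
        omega
      · rw [if_neg hpi2, Finset.card_eq_zero, Finset.filter_eq_empty_iff]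
        intro x _
        split_ifs <;> assumption
  · rw [if_neg ho]
    have ho' : Even (negc neg σ a p w) := Nat.not_odd_iff_even.1 ho
    have h1 := mono_fix s (fun x => (π ^ p) x) hs (fun x hx y hy hxy => by
      have := hG.order_iter x y hxy (((hmem x).1 hx).trans ((hmem y).1 hy).symm) p
      rw [(hmem x).1 hx] at this
      exact this.1 ho')
    have hper : ∀ x ∈ s, minimalPeriod π x = p := by
      intro x hx
      exact Nat.dvd_antisymm (IsPeriodicPt.minimalPeriod_dvd ((perm_isPeriodicPt _ _ _).2 (h1 x hx)))
          (hdvd x hx)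
    split_ifs with hpi
    · rw [← hcard, Finset.filter_true_of_mem]
      intro x hx; rw [hper x hx, hpi]
    · rw [Finset.card_eq_zero, Finset.filter_eq_empty_iff]
      intro x hx; rw [hper x hx]; exact hpi

lemma Good.period_count [Fintype Q] {π : Equiv.Perm (Fin n)} {W : Fin n → Q}
    (hG : Good neg σ a π W) (i : ℕ) :
    (Finset.univ.filter fun x => minimalPeriod π x = i).card =
      ∑ w, contrib (minimalPeriod σ w) (fib W w) i (oddw neg σ a w) := by
  rw [Finset.card_eq_sum_card_fiberwise (f := W) (t := Finset.univ) (by intro x _; simp)]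
  apply Finset.sum_congr rfl
  intro w _
  rw [← hG.fiber_count w i, Finset.filter_filter]
  congr 1
  ext x; simp [and_comm]

end

lemma minimalPeriod_eq_card {n : ℕ} (π : Equiv.Perm (Fin n)) (x : Fin n) (hx : π x ≠ x) :
    minimalPeriod π x = (π.cycleOf x).support.card := by
  have hc := (Equiv.Perm.isCycle_cycleOf_iff π).2 hx
  rw [← hc.orderOf]
  have key : ∀ j, (π ^ j) x = x ↔ (π.cycleOf x) ^ j = 1 := by
    intro j
    rw [hc.pow_eq_one_iff' (x := x) (by rwa [Equiv.Perm.cycleOf_apply_self]),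
      Equiv.Perm.cycleOf_pow_apply_self]
  apply Nat.dvd_antisymm
  · apply IsPeriodicPt.minimalPeriod_dvd
    rw [perm_isPeriodicPt, key, pow_orderOf_eq_one]
  · rw [orderOf_dvd_iff_pow_eq_one, ← key, ← perm_isPeriodicPt]
    exact isPeriodicPt_minimalPeriod _ _

lemma count_fullCycleType {n : ℕ} (π : Equiv.Perm (Fin n)) (i : ℕ) (hi : 1 ≤ i) :
    (Finset.univ.filter fun x => minimalPeriod π x = i).card =
      i * Multiset.count i (fullCycleType n π) := by
  rcases hi.eq_or_lt with rfl | hi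
  · rw [fullCycleType, Multiset.count_add, Multiset.count_replicate_self,
      Multiset.count_eq_zero_of_notMem, zero_add, one_mul]
    · have h1 := Finset.card_filter_add_card_filter_not (s := (Finset.univ : Finset (Fin n)))
        (fun x => minimalPeriod π x = 1)
      have h2 : (Finset.univ.filter fun x => ¬ minimalPeriod π x = 1) = π.support := by
        ext x
        simp [minimalPeriod_eq_one_iff_isFixedPt, IsFixedPt]
      rw [h2] at h1
      simp only [Finset.card_univ, Fintype.card_fin] at h1
      omega
    · intro h
      have := Equiv.Perm.two_le_of_mem_cycleType h
      omega
  · have h1 : Multiset.count i (fullCycleType n π) =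
        (π.cycleFactorsFinset.filter fun c => c.support.card = i).card := by
      rw [fullCycleType, Multiset.count_add, Multiset.count_replicate, if_neg (by omega), add_zero,
        Equiv.Perm.cycleType_def, Multiset.count_map, Finset.card_def, Finset.filter_val]
      congr 1
      apply Multiset.filter_congr
      intro c _
      simp only [Function.comp]
      exact eq_comm
    have hsup : ∀ x, minimalPeriod π x = i → π x ≠ x := by
      intro x hx h
      have : minimalPeriod π x = 1 := minimalPeriod_eq_one_iff_isFixedPt.2 h
      omega
    rw [h1, Finset.card_eq_sum_card_fiberwise (f := fun x => π.cycleOf x)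
      (t := π.cycleFactorsFinset.filter fun c => c.support.card = i), mul_comm]
    · apply Finset.sum_const_nat
      intro c hc
      rw [Finset.mem_filter] at hc
      rw [← hc.2]
      congr 1
      ext x
      simp only [Finset.mem_filter, Finset.mem_univ, true_and]
      constructor
      · rintro ⟨hx, rfl⟩
        rw [Equiv.Perm.mem_support_cycleOf_iff]
        refine ⟨Equiv.Perm.SameCycle.refl _ _, ?_⟩
        rw [Equiv.Perm.mem_support]
        rw [hc.2] at hx
        exact hsup x hx
      · intro hx
        have hcx := Equiv.Perm.cycle_is_cycleOf hx hc.1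
        refine ⟨?_, hcx.symm⟩
        rw [minimalPeriod_eq_card, ← hcx]
        rw [← Equiv.Perm.mem_support]
        exact Equiv.Perm.mem_cycleFactorsFinset_support_le hc.1 hx
    · intro x hx
      simp only [Finset.coe_filter, Finset.mem_univ, true_and, Set.mem_setOf_eq] at hx ⊢
      have := hsup x hx
      refine ⟨Equiv.Perm.cycleOf_mem_cycleFactorsFinset_iff.2 (Equiv.Perm.mem_support.2 this), ?_⟩
      rw [← minimalPeriod_eq_card π x this, hx]

lemma count_zero_fullCycleType {n : ℕ} (π : Equiv.Perm (Fin n)) :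
    Multiset.count 0 (fullCycleType n π) = 0 := by
  rw [fullCycleType, Multiset.count_add, Multiset.count_replicate, if_neg (by omega), add_zero]
  apply Multiset.count_eq_zero_of_notMem
  intro h
  have := Equiv.Perm.two_le_of_mem_cycleType h
  omega

end DFH

namespace DFH
open PowerSeries

lemma geom_coeff (j : ℕ) : coeff j ((1 - X : PowerSeries ℚ)⁻¹) = 1 := by
  have h : (1 - X : PowerSeries ℚ)⁻¹ = mk (fun _ => (1 : ℚ)) := by
    rw [PowerSeries.inv_eq_iff_mul_eq_one (by simp)]
    have h2 := one_sub_mul_mk_sum (fun v => if v = 0 then 1 else 0)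
    simp only [Finset.sum_ite_eq', Finset.mem_range, Nat.succ_pos, if_true] at h2
    rw [mul_comm, h2]
    ext v; simp [coeff_one]
  rw [h, coeff_mk]

lemma one_add_coeff (j : ℕ) : coeff j (1 + X : PowerSeries ℚ) = if j ≤ 1 then 1 else 0 := by
  rw [map_add, coeff_one, coeff_X]
  rcases j with _ | _ | j <;> simp

lemma cap_count {S : Type} [Fintype S] (cap : S → Prop) (m : ℕ) :
    (Nat.card {L : S → ℕ // (∀ s, cap s → L s ≤ 1) ∧ ∑ s, L s = m} : ℚ) =
      coeff m (∏ s : S, if cap s then (1 + X : PowerSeries ℚ) else (1 - X)⁻¹) := by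
  rw [PowerSeries.coeff_prod]
  have h1 : ∀ l : S →₀ ℕ, ∏ s, coeff (l s) (if cap s then (1 + X : PowerSeries ℚ) else (1 - X)⁻¹)
      = if ∀ s, cap s → l s ≤ 1 then 1 else 0 := by
    intro l
    have : ∀ s, coeff (l s) (if cap s then (1 + X : PowerSeries ℚ) else (1 - X)⁻¹) =
        if cap s → l s ≤ 1 then 1 else 0 := by
      intro s
      by_cases hs : cap s
      · rw [if_pos hs, one_add_coeff]; simp [hs]
      · rw [if_neg hs, geom_coeff]; simp [hs]
    simp only [this]
    rw [Finset.prod_ite_zero]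
    simp
  simp only [h1]
  rw [Finset.sum_boole]
  congr 1
  rw [← Nat.card_eq_finsetCard]
  apply Nat.card_congr
  apply Equiv.subtypeEquiv Finsupp.equivFunOnFinite.symm
  intro L
  simp only [Finset.mem_filter, Finset.mem_finsuppAntidiag, Finset.subset_univ, and_true]
  simp [and_comm]

lemma slots_count {S : Type} [Fintype S] (cap : S → Prop) (size : S → ℕ) (m : ℕ → ℕ) (B : ℕ)
    (hB : ∀ s, size s < B) (hm : ∀ i, B ≤ i → m i = 0) :
    (Nat.card {L : S → ℕ // (∀ s, cap s → L s ≤ 1) ∧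
      ∀ i, ∑ s : {s // size s = i}, L s = m i} : ℚ) =
      ∏ i ∈ Finset.range B, coeff (m i)
        (∏ s : {s // size s = i}, if cap s then (1 + X : PowerSeries ℚ) else (1 - X)⁻¹) := by
  have e : {L : S → ℕ // (∀ s, cap s → L s ≤ 1) ∧
      ∀ i, ∑ s : {s // size s = i}, L s = m i} ≃
      ∀ i : Fin B, {L : {s // size s = i.val} → ℕ // (∀ s, cap s.1 → L s ≤ 1) ∧ ∑ s, L s = m i} :=
    { toFun := fun L i => ⟨fun s => L.1 s.1, fun s hs => L.2.1 s.1 hs, L.2.2 i⟩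
      invFun := fun G => ⟨fun s => (G ⟨size s, hB s⟩).1 ⟨s, rfl⟩,
        fun s hs => (G ⟨size s, hB s⟩).2.1 ⟨s, rfl⟩ hs, fun i => by
          by_cases hi : i < B
          · rw [← (G ⟨i, hi⟩).2.2]
            apply Finset.sum_congr rfl
            rintro ⟨s, rfl⟩ _
            rfl
          · rw [hm i (not_lt.1 hi)]
            apply Finset.sum_eq_zero
            rintro ⟨s, rfl⟩ _
            exact absurd (hB s) hi⟩
      left_inv := fun L => rfl
      right_inv := fun G => by
        funext i
        apply Subtype.ext
        funext ⟨s, hs⟩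
        obtain ⟨i, hi⟩ := i
        simp only at hs
        subst hs
        rfl }
  rw [Nat.card_congr e, Nat.card_pi, Nat.cast_prod, Finset.prod_range]
  apply Finset.prod_congr rfl
  intro i _
  rw [← cap_count (fun s : {s // size s = i.val} => cap s.1) (m i)]

lemma prod_eq_pow {S : Type} [Fintype S] (cap : S → Prop) :
    (∏ s : S, if cap s then (1 + X : PowerSeries ℚ) else (1 - X)⁻¹) =
      (1 + X) ^ (Finset.univ.filter fun s => cap s).card *
      ((1 - X)⁻¹) ^ (Finset.univ.filter fun s => ¬ cap s).card := by
  rw [Finset.prod_ite, Finset.prod_const, Finset.prod_const]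

end DFH

namespace DFH
open Function

section
variable {Q : Type} [Fintype Q] (σ : Equiv.Perm Q)

def Neck : Type := Quotient (Equiv.Perm.SameCycle.setoid σ)

instance : Fintype (Neck σ) := inferInstanceAs (Fintype (Quotient (Equiv.Perm.SameCycle.setoid σ)))

def toNeck (w : Q) : Neck σ := Quotient.mk (Equiv.Perm.SameCycle.setoid σ) w

lemma toNeck_eq (w v : Q) : toNeck σ w = toNeck σ v ↔ σ.SameCycle w v := Quotient.eq (r := Equiv.Perm.SameCycle.setoid σ)

lemma toNeck_surj : Surjective (toNeck σ) := Quotient.mk_surjective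

lemma toNeck_apply (w : Q) : toNeck σ (σ w) = toNeck σ w := by
  rw [toNeck_eq]
  exact Equiv.Perm.sameCycle_apply_left.2 (Equiv.Perm.SameCycle.refl _ _)

lemma sameCycle_pow {w v : Q} (h : σ.SameCycle w v) : ∃ j : ℕ, (σ ^ j) w = v := by
  obtain ⟨j, _, hj⟩ := h.exists_pow_eq'
  exact ⟨j, hj⟩

lemma inv_pow {β : Type} (h : Q → β) (hh : ∀ w, h (σ w) = h w) (j : ℕ) (w : Q) :
    h ((σ ^ j) w) = h w := by
  induction j with
  | zero => rfl
  | succ j ih => rw [pow_succ', Equiv.Perm.mul_apply, hh, ih]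

def rep (ν : Neck σ) : Q := (toNeck_surj σ ν).choose
lemma toNeck_rep (ν : Neck σ) : toNeck σ (rep σ ν) = ν := (toNeck_surj σ ν).choose_spec

lemma inv_rep {β : Type} (h : Q → β) (hh : ∀ w, h (σ w) = h w) (w : Q) :
    h (rep σ (toNeck σ w)) = h w := by
  obtain ⟨j, hj⟩ := sameCycle_pow σ ((toNeck_eq σ _ _).1 (toNeck_rep σ (toNeck σ w)))
  conv_rhs => rw [← hj]
  rw [inv_pow σ h hh]

lemma mem_per (w : Q) : w ∈ periodicPts σ :=
  mem_periodicPts.2 ⟨_, orderOf_pos σ, by rw [perm_isPeriodicPt, pow_orderOf_eq_one]; rfl⟩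

lemma per_pos (w : Q) : 0 < minimalPeriod σ w := minimalPeriod_pos_of_mem_periodicPts (mem_per σ w)

lemma per_inv (w : Q) : minimalPeriod σ (σ w) = minimalPeriod σ w :=
  minimalPeriod_apply (mem_per σ w)

lemma card_class (ν : Neck σ) :
    (Finset.univ.filter fun w => toNeck σ w = ν).card = minimalPeriod σ (rep σ ν) := by
  rw [← Finset.card_range (minimalPeriod σ (rep σ ν))]
  symm
  apply Finset.card_bij (fun j _ => (σ ^ j) (rep σ ν))
  · intro j _
    rw [Finset.mem_filter]
    refine ⟨Finset.mem_univ _, ?_⟩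
    rw [inv_pow σ (toNeck σ) (toNeck_apply σ), toNeck_rep]
  · intro i hi j hj hij
    rw [← Equiv.Perm.iterate_eq_pow, ← Equiv.Perm.iterate_eq_pow] at hij
    exact iterate_injOn_Iio_minimalPeriod (by simpa using hi) (by simpa using hj) hij
  · intro w hw
    rw [Finset.mem_filter] at hw
    have hw := hw.2
    rw [← toNeck_rep σ ν, eq_comm, toNeck_eq] at hw
    obtain ⟨j, hj⟩ := sameCycle_pow σ hw
    refine ⟨j % minimalPeriod σ (rep σ ν), ?_, ?_⟩
    · rw [Finset.mem_range]; exact Nat.mod_lt _ (per_pos σ _)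
    · rw [← Equiv.Perm.iterate_eq_pow, iterate_mod_minimalPeriod_eq, Equiv.Perm.iterate_eq_pow, hj]

lemma sum_neck (h : Q → ℕ) (hh : ∀ w, h (σ w) = h w) :
    ∑ w, h w = ∑ ν : Neck σ, minimalPeriod σ (rep σ ν) * h (rep σ ν) := by
  rw [← Finset.sum_fiberwise (g := toNeck σ)]
  apply Finset.sum_congr rfl
  intro ν _
  rw [← card_class]
  rw [Finset.sum_const_nat (m := h (rep σ ν))]
  intro w hw
  rw [Finset.mem_filter] at hw
  rw [← hw.2, inv_rep σ h hh]

variable (P : Q → Prop)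

abbrev Slot : Type := Neck σ ⊕ {ν : Neck σ // P (rep σ ν)}

def ssize : Slot σ P → ℕ
  | Sum.inl ν => minimalPeriod σ (rep σ ν)
  | Sum.inr ν => 2 * minimalPeriod σ (rep σ ν.1)

def scap : Slot σ P → Prop
  | Sum.inl ν => P (rep σ ν)
  | Sum.inr _ => False

def toL (F : Neck σ → ℕ) : Slot σ P → ℕ
  | Sum.inl ν => if P (rep σ ν) then F ν % 2 else F ν
  | Sum.inr ν => F ν.1 / 2

lemma toL_cap (F : Neck σ → ℕ) (s : Slot σ P) (hs : scap σ P s) : toL σ P F s ≤ 1 := by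
  rcases s with ν | ν
  · simp only [scap] at hs
    simp only [toL, if_pos hs]; omega
  · exact hs.elim

lemma toL_inj : Injective (toL σ P) := by
  intro F G h
  funext ν
  have h1 := congrFun h (Sum.inl ν)
  simp only [toL] at h1
  by_cases hP : P (rep σ ν)
  · have h2 := congrFun h (Sum.inr ⟨ν, hP⟩)
    simp only [toL] at h2
    simp only [if_pos hP] at h1
    omega
  · simpa only [if_neg hP] using h1

lemma toL_surj (L : Slot σ P → ℕ) (hL : ∀ s, scap σ P s → L s ≤ 1) : ∃ F, toL σ P F = L := by
  refine ⟨fun ν => if h : P (rep σ ν) then L (Sum.inl ν) + 2 * L (Sum.inr ⟨ν, h⟩) else L (Sum.inl ν), ?_⟩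
  funext s
  rcases s with ν | ⟨ν, hν⟩
  · simp only [toL]
    split_ifs with h
    · have := hL (Sum.inl ν) h
      omega
    · rfl
  · have := hL (Sum.inl ν) hν
    simp only [toL, dif_pos hν]
    omega

lemma sum_slot (H : Slot σ P → ℕ) (i : ℕ) :
    ∑ s : {s // ssize σ P s = i}, H s = ∑ ν : Neck σ,
      ((if minimalPeriod σ (rep σ ν) = i then H (Sum.inl ν) else 0) +
       (if h : P (rep σ ν) then (if 2 * minimalPeriod σ (rep σ ν) = i then H (Sum.inr ⟨ν, h⟩) else 0)
         else 0)) := by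
  have h1 : ∑ s : {s // ssize σ P s = i}, H s = ∑ s, if ssize σ P s = i then H s else 0 := by
    rw [← Finset.sum_filter]
    symm
    apply Finset.sum_subtype
    simp
  rw [h1, Fintype.sum_sum_type, Finset.sum_add_distrib]
  congr 1
  simp only [ssize]
  rw [← Finset.sum_subset (Finset.filter_subset (fun ν => P (rep σ ν)) Finset.univ)]
  · rw [Finset.sum_subtype (p := fun ν => P (rep σ ν)) _ (by simp)]
    apply Finset.sum_congr rfl
    rintro ⟨ν, hν⟩ _
    rw [dif_pos hν]
    rfl
  · intro ν _ hν
    rw [dif_neg]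
    simpa using hν

lemma contrib_sum (F : Neck σ → ℕ) (hP : ∀ w, P (σ w) = P w) (i : ℕ) :
    ∑ w, contrib (minimalPeriod σ w) (F (toNeck σ w)) i (P w) =
      i * ∑ s : {s // ssize σ P s = i}, toL σ P F s := by
  rw [sum_neck σ, sum_slot, Finset.mul_sum]
  · apply Finset.sum_congr rfl
    intro ν _
    rw [toNeck_rep]
    simp only [contrib, toL]
    by_cases h2 : P (rep σ ν)
    · simp only [if_pos h2, dif_pos h2, mul_add]
      congr 1
      · split_ifs with h1
        · rw [h1]
        · simp
      · split_ifs with h1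
        · rw [← h1]; ring
        · simp
    · simp only [if_neg h2, dif_neg h2, add_zero]
      split_ifs with h1
      · rw [h1]
      · simp
  · intro w
    rw [toNeck_apply, per_inv, hP]

lemma inv_count (hP : ∀ w, P (σ w) = P w) (m : ℕ → ℕ) (B : ℕ)
    (hB : ∀ w, 2 * minimalPeriod σ w < B) (hm : ∀ i, B ≤ i → m i = 0) (hm0 : m 0 = 0) (g : ℕ → ℕ)
    (ho : ∀ i, 1 ≤ i → m i ≠ 0 →
      (Finset.univ.filter fun w => minimalPeriod σ w = i ∧ P w).card = i * g i)
    (he : ∀ i, 1 ≤ i → m i ≠ 0 →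
      (Finset.univ.filter fun w => minimalPeriod σ w = i ∧ ¬ P w).card +
      2 * (Finset.univ.filter fun w => 2 * minimalPeriod σ w = i ∧ P w).card = i * g i) :
    (Nat.card {M : Q → ℕ // (∀ w, M (σ w) = M w) ∧
      ∀ i, 1 ≤ i → ∑ w, contrib (minimalPeriod σ w) (M w) i (P w) = i * m i} : ℚ) =
    ∏ i ∈ Finset.range B, if m i = 0 then 1 else Ncoef (g i) (m i) := by
  have cond : ∀ F : Neck σ → ℕ, (∀ i, 1 ≤ i →
      ∑ w, contrib (minimalPeriod σ w) (F (toNeck σ w)) i (P w) = i * m i) ↔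
      ∀ i, ∑ s : {s // ssize σ P s = i}, toL σ P F s = m i := by
    intro F
    constructor
    · intro h i
      rcases Nat.eq_zero_or_pos i with rfl | hi
      · rw [hm0]
        apply Finset.sum_eq_zero
        rintro ⟨s, hs⟩ _
        exfalso
        rcases s with ν | ν
        · exact absurd hs (per_pos σ _).ne'
        · have := per_pos σ (rep σ ν.1)
          simp only [ssize] at hs
          omega
      · have := h i hi
        rw [contrib_sum σ P F hP] at this
        exact Nat.eq_of_mul_eq_mul_left hi this
    · intro h i _
      rw [contrib_sum σ P F hP, h]
  have c1 : Nat.card {M : Q → ℕ // (∀ w, M (σ w) = M w) ∧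
      ∀ i, 1 ≤ i → ∑ w, contrib (minimalPeriod σ w) (M w) i (P w) = i * m i} =
      Nat.card {F : Neck σ → ℕ // ∀ i, ∑ s : {s // ssize σ P s = i}, toL σ P F s = m i} := by
    symm
    apply Nat.card_eq_of_bijective (fun F => ⟨fun w => F.1 (toNeck σ w),
      fun w => congrArg F.1 (toNeck_apply σ w), (cond F.1).2 F.2⟩)
    constructor
    · rintro ⟨F, hF⟩ ⟨G, hG⟩ h
      apply Subtype.ext
      funext ν
      have := congrFun (congrArg Subtype.val h) (rep σ ν)
      simpa only [toNeck_rep] using this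
    · rintro ⟨M, hM, hM'⟩
      have hMM : (fun w => M (rep σ (toNeck σ w))) = M := by
        funext w; exact inv_rep σ M hM w
      refine ⟨⟨fun ν => M (rep σ ν), (cond _).1 ?_⟩, Subtype.ext hMM⟩
      simp only [inv_rep σ M hM]
      exact hM'
  have c2 : Nat.card {F : Neck σ → ℕ // ∀ i, ∑ s : {s // ssize σ P s = i}, toL σ P F s = m i} =
      Nat.card {L : Slot σ P → ℕ // (∀ s, scap σ P s → L s ≤ 1) ∧
        ∀ i, ∑ s : {s // ssize σ P s = i}, L s = m i} := by
    apply Nat.card_eq_of_bijective (fun F => ⟨toL σ P F.1, toL_cap σ P F.1, F.2⟩)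
    constructor
    · rintro ⟨F, hF⟩ ⟨G, hG⟩ h
      apply Subtype.ext
      exact toL_inj σ P (congrArg Subtype.val h)
    · rintro ⟨L, hL, hL'⟩
      obtain ⟨F, rfl⟩ := toL_surj σ P L hL
      exact ⟨⟨F, hL'⟩, rfl⟩
  rw [c1, c2, slots_count (scap σ P) (ssize σ P) m B _ hm]
  · apply Finset.prod_congr rfl
    intro i _
    rw [prod_eq_pow (fun s : {s // ssize σ P s = i} => scap σ P s)]
    split_ifs with hmi
    · rw [hmi]; simp
    · have hi : 1 ≤ i := by
        by_contra hcon
        have : i = 0 := by omega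
        subst this; exact hmi hm0
      have key1 : (Finset.univ.filter fun s : {s // ssize σ P s = i} => scap σ P s).card = g i := by
        apply Nat.eq_of_mul_eq_mul_left hi
        rw [← ho i hi hmi, Finset.card_filter, Finset.card_filter,
          sum_slot σ P (fun s => if scap σ P s then 1 else 0), sum_neck σ, Finset.mul_sum]
        · apply Finset.sum_congr rfl
          intro ν _
          simp only [scap]
          by_cases h1 : minimalPeriod σ (rep σ ν) = i <;> by_cases h2 : P (rep σ ν) <;> simp [h1, h2]
        · intro w; rw [per_inv, hP]
      have key2 : (Finset.univ.filter fun s : {s // ssize σ P s = i} => ¬ scap σ P s).card = g i := by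
        apply Nat.eq_of_mul_eq_mul_left hi
        rw [← he i hi hmi, Finset.card_filter, Finset.card_filter, Finset.card_filter,
          sum_slot σ P (fun s => if ¬ scap σ P s then 1 else 0), sum_neck σ, sum_neck σ, Finset.mul_sum,
          Finset.mul_sum, ← Finset.sum_add_distrib]
        · apply Finset.sum_congr rfl
          intro ν _
          simp only [scap]
          have hpp := per_pos σ (rep σ ν)
          generalize minimalPeriod σ (rep σ ν) = p at hpp
          by_cases h2 : P (rep σ ν)
          · simp only [h2, not_true, if_false, dite_true, and_false, and_true, if_true, not_false_eq_true,
              mul_add]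
            split_ifs <;> omega
          · simp only [h2, not_false_eq_true, dif_neg, and_true, and_false, if_true, if_false]
            split_ifs with h1 <;> simp [h1]
        · intro w; rw [per_inv, hP]
        · intro w; rw [per_inv, hP]
      rw [key1, key2]
      rfl
  · rintro (ν | ν)
    · have := hB (rep σ ν)
      simp only [ssize]; omega
    · exact hB _

end
end DFH

namespace DFH
open Function

section
variable {K : ℕ} (neg : Fin K → Prop)

def sg (c : Fin K) : ℤ := if neg c then -1 else 1

lemma sg_sq (c : Fin K) : sg neg c * sg neg c = 1 := by
  unfold sg; split_ifs <;> norm_num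

def eps (w : ℕ → Fin K) (j : ℕ) : ℤ := ∏ i ∈ Finset.range j, sg neg (w i)

lemma eps_sq (w : ℕ → Fin K) (j : ℕ) : eps neg w j * eps neg w j = 1 := by
  unfold eps
  rw [← Finset.prod_mul_distrib]
  exact Finset.prod_eq_one (fun i _ => sg_sq neg _)

def key (w : ℕ → Fin K) (j : ℕ) : ℤ := eps neg w j * ((w j).val + 1)

lemma key_succ (w : ℕ → Fin K) (j : ℕ) :
    key neg w (j + 1) = sg neg (w 0) * key neg (fun i => w (i + 1)) j := by
  unfold key eps
  rw [Finset.prod_range_succ']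
  ring

lemma key_inj : Injective (key neg) := by
  intro v w h
  have : ∀ j, ∀ i < j, v i = w i := by
    intro j
    induction j with
    | zero => intro i hi; omega
    | succ j ih =>
      intro i hi
      rcases Nat.lt_succ_iff_lt_or_eq.1 hi with hi | rfl
      · exact ih i hi
      · have he : eps neg v i = eps neg w i := by
          apply Finset.prod_congr rfl
          intro l hl
          rw [ih l (Finset.mem_range.1 hl)]
        have h2 := congrFun h i
        unfold key at h2
        rw [he] at h2
        have h3 := congrArg (fun z => eps neg w i * z) h2
        simp only [← mul_assoc, eps_sq, one_mul] at h3
        apply Fin.ext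
        omega
  funext j
  exact this (j + 1) j (by omega)

@[ext]
structure Wd (neg : Fin K → Prop) (N : ℕ) : Type where
  val : ℕ → Fin K
  prop : ∀ j, val (j + N) = val j

variable {neg} {N : ℕ}

instance wdOrder : LinearOrder (Wd neg N) :=
  LinearOrder.lift' (fun w : Wd neg N => toLex (key neg w.1)) (by
    intro v w h
    apply Wd.ext
    exact key_inj neg (toLex_inj.1 h))

lemma wd_lt (v w : Wd neg N) : v < w ↔ ∃ i, (∀ j < i, key neg v.1 j = key neg w.1 j) ∧
    key neg v.1 i < key neg w.1 i := Iff.rfl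

lemma wd_mod (w : Wd neg N) (j : ℕ) : w.1 (j % N) = w.1 j := by
  have : ∀ q r, w.1 (r + N * q) = w.1 r := by
    intro q
    induction q with
    | zero => intro r; simp
    | succ q ih => intro r; rw [mul_add, mul_one, ← add_assoc, w.2, ih]
  conv_rhs => rw [← Nat.mod_add_div j N]
  rw [this]

lemma wd_finite (hN : 0 < N) : Finite (Wd neg N) := by
  apply Finite.of_injective (fun (w : Wd neg N) (j : Fin N) => w.1 j.val)
  intro v w h
  apply Wd.ext
  funext j
  rw [← wd_mod v, ← wd_mod w]
  exact congrFun h ⟨j % N, Nat.mod_lt _ hN⟩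

def shf (hN : 0 < N) : Equiv.Perm (Wd neg N) where
  toFun w := ⟨fun j => w.1 (j + 1), fun j => by beta_reduce; rw [add_right_comm, w.2]⟩
  invFun w := ⟨fun j => w.1 (j + (N - 1)), fun j => by beta_reduce; rw [add_right_comm, w.2]⟩
  left_inv w := by
    apply Wd.ext
    funext j
    show w.1 (j + (N - 1) + 1) = w.1 j
    rw [add_assoc, Nat.sub_add_cancel hN, w.2]
  right_inv w := by
    apply Wd.ext
    funext j
    show w.1 (j + 1 + (N - 1)) = w.1 j
    rw [add_assoc, Nat.add_sub_cancel' hN, w.2]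

def hd (w : Wd neg N) : Fin K := w.1 0

lemma shf_pow (hN : 0 < N) (i : ℕ) (w : Wd neg N) (j : ℕ) : ((shf hN ^ i) w).1 j = w.1 (j + i) := by
  induction i generalizing j with
  | zero => rfl
  | succ i ih =>
    rw [pow_succ', Equiv.Perm.mul_apply]
    show ((shf hN ^ i) w).1 (j + 1) = _
    rw [ih, add_assoc, add_comm 1 i]

lemma hd_pow (hN : 0 < N) (i : ℕ) (w : Wd neg N) : hd ((shf hN ^ i) w) = w.1 i := by
  unfold hd; rw [shf_pow, zero_add]

lemma key_shf (hN : 0 < N) (w : Wd neg N) (j : ℕ) :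
    key neg w.1 (j + 1) = sg neg (hd w) * key neg (shf hN w).1 j := key_succ neg w.1 j

lemma key_zero (w : Wd neg N) : key neg w.1 0 = (hd w).val + 1 := by
  unfold key eps hd; simp

lemma wd_univ (hN : 0 < N) : UnivSys neg (shf (neg := neg) hN) hd where
  compat v w h := by
    rw [wd_lt] at h
    obtain ⟨i, h1, h2⟩ := h
    rcases i with _ | i
    · left
      rw [key_zero, key_zero] at h2
      rw [Fin.lt_def]; omega
    · right
      have h0 : hd v = hd w := by
        have := h1 0 (by omega)
        rw [key_zero, key_zero] at this
        apply Fin.ext; omega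
      have h3 : ∀ j < i, key neg (shf hN v).1 j = key neg (shf hN w).1 j := by
        intro j hj
        have := h1 (j + 1) (by omega)
        rw [key_shf hN, key_shf hN, h0] at this
        have h3 := congrArg (fun z => sg neg (hd w) * z) this
        simpa only [← mul_assoc, sg_sq, one_mul] using h3
      rw [key_shf hN, key_shf hN, h0] at h2
      refine ⟨h0, ?_, ?_⟩
      · intro hn
        rw [h0] at hn
        rw [sg, if_pos hn] at h2
        rw [wd_lt]
        exact ⟨i, fun j hj => (h3 j hj).symm, by linarith⟩
      · intro hn
        rw [h0] at hn
        rw [sg, if_neg hn] at h2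
        rw [wd_lt]
        exact ⟨i, h3, by linarith⟩
  sep v w h := by
    apply Wd.ext
    funext j
    simpa only [hd_pow] using h j

/-- The word system attached to a permutation with a compatible function. -/
def mkW {n : ℕ} (neg : Fin K → Prop) (π : Equiv.Perm (Fin n)) (f : Fin n → Fin K) (x : Fin n) :
    Wd neg n.factorial :=
  ⟨fun j => f ((π ^ j) x), fun j => by
    have : π ^ n.factorial = 1 := by
      have := pow_card_eq_one (x := π)
      rwa [Fintype.card_perm, Fintype.card_fin] at this
    beta_reduce
    rw [pow_add, this, mul_one]⟩

lemma mkW_good {n : ℕ} (π : Equiv.Perm (Fin n)) (f : Fin n → Fin K) (h : Compat neg π f) :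
    Good neg (shf n.factorial_pos) hd π (mkW neg π f) where
  compat := h
  equi x := by
    apply Wd.ext
    funext j
    show f ((π ^ j) (π x)) = f ((π ^ (j + 1)) x)
    rw [pow_succ, Equiv.Perm.mul_apply]

lemma good_mkW {n : ℕ} (π : Equiv.Perm (Fin n)) (W : Fin n → Wd neg n.factorial)
    (h : Good neg (shf n.factorial_pos) hd π W) : mkW neg π (fun x => hd (W x)) = W := by
  funext x
  apply Wd.ext
  funext j
  show hd (W ((π ^ j) x)) = _
  rw [h.equi_pow, hd_pow]

end

section
variable {A Q : Type} [Fintype Q] (neg : A → Prop) (σ : Equiv.Perm Q) (a : Q → A)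

lemma negc_succ' (j : ℕ) (w : Q) :
    negc neg σ a (j + 1) w = negc neg σ a j (σ w) + if neg (a w) then 1 else 0 := by
  induction j with
  | zero => rw [negc_succ]; simp [negc]
  | succ j ih =>
    rw [negc_succ, ih, negc_succ, pow_succ, Equiv.Perm.mul_apply]
    ring

lemma oddw_inv (w : Q) : oddw neg σ a (σ w) = oddw neg σ a w := by
  unfold oddw
  rw [per_inv]
  congr 1
  have h1 := negc_succ neg σ a (minimalPeriod σ w) w
  rw [negc_succ'] at h1
  have : (σ ^ minimalPeriod σ w) w = w := by
    rw [← perm_isPeriodicPt]; exact isPeriodicPt_minimalPeriod _ _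
  rw [this] at h1
  omega

lemma negc_add (i j : ℕ) (w : Q) :
    negc neg σ a (i + j) w = negc neg σ a i w + negc neg σ a j ((σ ^ i) w) := by
  induction j with
  | zero => simp [negc]
  | succ j ih =>
    rw [← add_assoc, negc_succ, ih, negc_succ, add_comm i j, pow_add, Equiv.Perm.mul_apply]
    ring

lemma negc_mul (d q : ℕ) (w : Q) (hw : (σ ^ d) w = w) :
    negc neg σ a (d * q) w = q * negc neg σ a d w := by
  induction q with
  | zero => simp [negc]
  | succ q ih => rw [Nat.mul_succ, add_comm, negc_add, hw, ih]; ring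

end
end DFH

namespace DFH
open Function

section arith

def chi : ArithmeticFunction ℤ := ⟨fun n => if Odd n then 1 else 0, by simp⟩

lemma chi_apply (n : ℕ) : chi n = if Odd n then 1 else 0 := rfl

lemma chi_mul (a b : ℕ) : chi (a * b) = chi a * chi b := by
  simp only [chi_apply, Nat.odd_mul]
  split_ifs <;> simp_all

lemma pmul_chi (f g : ArithmeticFunction ℤ) :
    (chi.pmul f) * (chi.pmul g) = chi.pmul (f * g) := by
  ext n
  simp only [ArithmeticFunction.mul_apply, ArithmeticFunction.pmul_apply, Finset.mul_sum]
  apply Finset.sum_congr rfl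
  intro x hx
  rw [← (Nat.mem_divisorsAntidiagonal.1 hx).1, chi_mul]
  ring

lemma mu_chi : (chi.pmul ArithmeticFunction.moebius) * chi = 1 := by
  have h : chi = chi.pmul (ArithmeticFunction.zeta : ArithmeticFunction ℤ) := by
    ext n
    rw [ArithmeticFunction.pmul_apply, ArithmeticFunction.natCoe_apply, ArithmeticFunction.zeta_apply]
    split_ifs with h
    · simp [h, chi_apply]
    · simp
  have h' : (chi.pmul ArithmeticFunction.moebius) * chi = (chi.pmul ArithmeticFunction.moebius) *
      (chi.pmul (ArithmeticFunction.zeta : ArithmeticFunction ℤ)) := by rw [← h]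
  rw [h', pmul_chi, ArithmeticFunction.moebius_mul_coe_zeta]
  ext n
  rw [ArithmeticFunction.pmul_apply, ArithmeticFunction.one_apply]
  split_ifs with h
  · simp [h, chi_apply]
  · simp

lemma neg_one_chi (q : ℕ) : (1 : ℤ) - (-1) ^ q = 2 * chi q := by
  rw [chi_apply]
  rcases Nat.even_or_odd q with h | h
  · rw [h.neg_one_pow, if_neg (Nat.not_odd_iff_even.2 h)]; norm_num
  · rw [h.neg_one_pow, if_pos h]; norm_num

lemma arith_a (o e : ℕ → ℤ) (K N : ℕ) (hN : 0 < N)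
    (h1 : ∀ i, i ∣ N → ∑ d ∈ i.divisors, (o d + e d) = (K : ℤ) ^ i)
    (h2 : ∀ i, i ∣ N → ∑ d ∈ i.divisors, ((-1) ^ (i / d) * o d + e d) = 0)
    (i : ℕ) (hi : i ∣ N) :
    2 * o i = ∑ d ∈ i.divisors.filter (fun d => Odd d),
            ArithmeticFunction.moebius d * (K : ℤ) ^ (i / d) := by
  have hi0 : i ≠ 0 := by rintro rfl; rw [zero_dvd_iff] at hi; omega
  let O : ArithmeticFunction ℤ := ⟨fun d => if d = 0 then 0 else 2 * o d, by simp⟩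
  have hO : ∀ d, d ≠ 0 → O d = 2 * o d := fun d hd => if_neg hd
  have h3 : ∀ j, j ∣ N → (chi * O) j = (K : ℤ) ^ j := by
    intro j hj
    rw [ArithmeticFunction.mul_apply, Nat.sum_divisorsAntidiagonal' (fun x y => chi x * O y)]
    have := h2 j hj
    rw [← h1 j hj, ← sub_zero (∑ d ∈ j.divisors, (o d + e d)), ← this, ← Finset.sum_sub_distrib]
    apply Finset.sum_congr rfl
    intro d hd
    rw [hO d (Nat.pos_of_mem_divisors hd).ne']
    linear_combination (-o d) * neg_one_chi (j / d)
  have h4 : (chi.pmul ArithmeticFunction.moebius * (chi * O)) i = O i := by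
    rw [← mul_assoc, mu_chi, one_mul]
  rw [← hO i hi0, ← h4, ArithmeticFunction.mul_apply,
    Nat.sum_divisorsAntidiagonal (fun x y => (chi.pmul ArithmeticFunction.moebius) x * (chi * O) y),
    Finset.sum_filter]
  apply Finset.sum_congr rfl
  intro d hd
  rw [h3 _ ((Nat.div_dvd_of_dvd (Nat.dvd_of_mem_divisors hd)).trans hi),
    ArithmeticFunction.pmul_apply, chi_apply]
  split_ifs <;> simp

lemma arith_b (o e : ℕ → ℤ) (N : ℕ) (hN : 0 < N)
    (h2 : ∀ i, i ∣ N → ∑ d ∈ i.divisors, ((-1) ^ (i / d) * o d + e d) = 0)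
    (i : ℕ) (hi : i ∣ N) :
    e i + 2 * (if 2 ∣ i then o (i / 2) else 0) = o i := by
  let D : ℕ → ℤ := fun i => e i + 2 * (if 2 ∣ i then o (i / 2) else 0) - o i
  have h3 : ∀ i, i ∣ N → ∑ d ∈ i.divisors, D d = 0 := by
    intro i hi
    have hi0 : i ≠ 0 := by rintro rfl; rw [zero_dvd_iff] at hi; omega
    rw [← h2 i hi]
    have h5 : ∑ d ∈ i.divisors, (if 2 ∣ d then o (d / 2) else 0) =
        ∑ d ∈ i.divisors, (if 2 ∣ i / d then o d else 0) := by
      rw [← Finset.sum_filter, ← Finset.sum_filter]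
      refine Finset.sum_bij' (fun d _ => d / 2) (fun d _ => 2 * d) ?_ ?_ ?_ ?_ ?_
      · intro d hd
        simp only [Finset.mem_filter, Nat.mem_divisors] at hd ⊢
        obtain ⟨⟨⟨c, rfl⟩, _⟩, ⟨b, rfl⟩⟩ := hd
        have hb : 0 < b := by
          rcases Nat.eq_zero_or_pos b with rfl | h
          · simp at hi0
          · exact h
        rw [Nat.mul_div_cancel_left _ two_pos]
        refine ⟨⟨⟨2 * c, by ring⟩, hi0⟩, ⟨c, ?_⟩⟩
        rw [show 2 * b * c = b * (2 * c) by ring, Nat.mul_div_cancel_left _ hb]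
      · intro d hd
        simp only [Finset.mem_filter, Nat.mem_divisors] at hd ⊢
        obtain ⟨⟨⟨c, rfl⟩, _⟩, h⟩ := hd
        have hb : 0 < d := by
          rcases Nat.eq_zero_or_pos d with rfl | h
          · simp at hi0
          · exact h
        rw [Nat.mul_div_cancel_left _ hb] at h
        obtain ⟨c, rfl⟩ := h
        exact ⟨⟨⟨c, by ring⟩, hi0⟩, ⟨d, rfl⟩⟩
      · intro d hd
        simp only [Finset.mem_filter] at hd
        exact Nat.mul_div_cancel' hd.2
      · intro d hd
        exact Nat.mul_div_cancel_left _ two_pos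
      · intro d hd; rfl
    simp only [D, Finset.sum_sub_distrib, Finset.sum_add_distrib, ← Finset.mul_sum]
    rw [h5, Finset.mul_sum, add_sub_assoc, ← Finset.sum_sub_distrib, add_comm]
    congr 1
    apply Finset.sum_congr rfl
    intro d _
    split_ifs with h
    · rw [(even_iff_two_dvd.2 h).neg_one_pow]; ring
    · rw [(Nat.not_even_iff_odd.1 (fun hh => h (even_iff_two_dvd.1 hh))).neg_one_pow]; ring
  have h4 : ∀ i, i ∣ N → D i = 0 := by
    intro i
    induction i using Nat.strong_induction_on with
    | _ i ih =>
      intro hi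
      have hi0 : i ≠ 0 := by rintro rfl; rw [zero_dvd_iff] at hi; omega
      have h5 := h3 i hi
      rw [← Nat.insert_self_properDivisors hi0, Finset.sum_insert Nat.self_notMem_properDivisors,
        Finset.sum_eq_zero, add_zero] at h5
      · exact h5
      · intro d hd
        rw [Nat.mem_properDivisors] at hd
        exact ih d hd.2 (hd.1.trans hi)
  have := h4 i hi
  simp only [D] at this
  linarith

end arith

section
variable {K : ℕ} {neg : Fin K → Prop} {N : ℕ} [Fintype (Wd neg N)] (hN : 0 < N)

lemma neg_one_negc {A Q : Type} (neg : A → Prop) (σ : Equiv.Perm Q) (a : Q → A) (j : ℕ) (w : Q) :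
    (-1 : ℤ) ^ negc neg σ a j w = ∏ i ∈ Finset.range j, if neg (a ((σ ^ i) w)) then -1 else 1 := by
  induction j with
  | zero => simp [negc]
  | succ j ih =>
    rw [negc_succ, pow_add, ih, Finset.prod_range_succ]
    split_ifs <;> simp

/-- Periodic words of period `i` are arbitrary words of length `i`. -/
lemma sum_fixed (i : ℕ) (hi : i ∣ N) (G : (Fin i → Fin K) → ℤ) :
    ∑ w ∈ Finset.univ.filter (fun w : Wd neg N => (shf hN ^ i) w = w), G (fun j => w.1 j.val) =
      ∑ f, G f := by
  have hi0 : 0 < i := Nat.pos_of_dvd_of_pos hi hN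
  have hper : ∀ w : Wd neg N, (shf hN ^ i) w = w → ∀ j, w.1 (j % i) = w.1 j := by
    intro w hw j
    have h1 : ∀ j, w.1 (j + i) = w.1 j := by
      intro j
      rw [← shf_pow hN, hw]
    exact wd_mod (⟨w.1, h1⟩ : Wd neg i) j
  refine Finset.sum_bij' (fun w _ j => w.1 j.val)
    (fun f _ => ⟨fun j => f ⟨j % i, Nat.mod_lt _ hi0⟩, fun j => by
      obtain ⟨c, rfl⟩ := hi
      simp⟩) ?_ ?_ ?_ ?_ ?_
  · intro w _; exact Finset.mem_univ _
  · intro f _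
    rw [Finset.mem_filter]
    refine ⟨Finset.mem_univ _, ?_⟩
    ext1
    funext j
    rw [shf_pow]
    simp
  · intro w hw
    rw [Finset.mem_filter] at hw
    ext1
    funext j
    exact hper w hw.2 j
  · intro f _
    funext j
    simp [Nat.mod_eq_of_lt j.2]
  · intro w _; rfl

lemma fixed_card (i : ℕ) (hi : i ∣ N) :
    ∑ w ∈ Finset.univ.filter (fun w : Wd neg N => (shf hN ^ i) w = w), (1 : ℤ) = (K : ℤ) ^ i := by
  rw [sum_fixed hN i hi (fun _ => 1)]
  simp

lemma fixed_sign (hs : ∑ c, sg neg c = 0) (i : ℕ) (hi : i ∣ N) :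
    ∑ w ∈ Finset.univ.filter (fun w : Wd neg N => (shf hN ^ i) w = w),
      (-1 : ℤ) ^ negc neg (shf hN) hd i w = 0 := by
  have hi0 : 0 < i := Nat.pos_of_dvd_of_pos hi hN
  have h := sum_fixed (neg := neg) hN i hi (fun f => ∏ j, sg neg (f j))
  rw [← Fintype.sum_pow, hs, zero_pow hi0.ne'] at h
  rw [← h]
  apply Finset.sum_congr rfl
  intro w _
  rw [neg_one_negc, ← Fin.prod_univ_eq_prod_range]
  simp only [hd_pow]
  rfl

lemma sum_fixed_per {Q : Type} [Fintype Q] [DecidableEq Q] (σ : Equiv.Perm Q) (i : ℕ) (hi : i ≠ 0) (F : Q → ℤ) :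
    ∑ w ∈ Finset.univ.filter (fun w => (σ ^ i) w = w), F w =
      ∑ d ∈ i.divisors, ∑ w ∈ Finset.univ.filter (fun w => minimalPeriod σ w = d), F w := by
  rw [← Finset.sum_fiberwise_of_maps_to (g := fun w => minimalPeriod σ w) (t := i.divisors)]
  · apply Finset.sum_congr rfl
    intro d hd
    rw [Finset.filter_filter]
    apply Finset.sum_congr _ (fun _ _ => rfl)
    ext w
    simp only [Finset.mem_filter, Finset.mem_univ, true_and]
    constructor
    · exact fun h => h.2
    · intro h
      refine ⟨?_, h⟩
      rw [← perm_isPeriodicPt, isPeriodicPt_iff_minimalPeriod_dvd, h]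
      exact Nat.dvd_of_mem_divisors hd
  · intro w hw
    rw [Finset.mem_filter, ← perm_isPeriodicPt, isPeriodicPt_iff_minimalPeriod_dvd] at hw
    exact Nat.mem_divisors.2 ⟨hw.2, hi⟩

def oc (i : ℕ) : ℕ := (Finset.univ.filter fun w : Wd neg N =>
  minimalPeriod (shf hN) w = i ∧ oddw neg (shf hN) hd w).card
def ec (i : ℕ) : ℕ := (Finset.univ.filter fun w : Wd neg N =>
  minimalPeriod (shf hN) w = i ∧ ¬ oddw neg (shf hN) hd w).card

lemma sum_per (d : ℕ) (F : Wd neg N → ℤ) (x y : ℤ)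
    (hF : ∀ w, minimalPeriod (shf hN) w = d → F w = if oddw neg (shf hN) hd w then x else y) :
    ∑ w ∈ Finset.univ.filter (fun w : Wd neg N => minimalPeriod (shf hN) w = d), F w =
      x * oc (neg := neg) hN d + y * ec (neg := neg) hN d := by
  rw [← Finset.sum_filter_add_sum_filter_not _ (fun w => oddw neg (shf hN) hd w)]
  rw [Finset.filter_filter, Finset.filter_filter]
  congr 1
  · rw [Finset.sum_congr rfl (g := fun _ => x), Finset.sum_const, nsmul_eq_mul, mul_comm]
    · rfl
    · intro w hw
      simp only [Finset.mem_filter] at hw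
      rw [hF w hw.2.1, if_pos hw.2.2]
  · rw [Finset.sum_congr rfl (g := fun _ => y), Finset.sum_const, nsmul_eq_mul, mul_comm]
    · rfl
    · intro w hw
      simp only [Finset.mem_filter] at hw
      rw [hF w hw.2.1, if_neg hw.2.2]

lemma words_1 (i : ℕ) (hi : i ∣ N) :
    ∑ d ∈ i.divisors, ((oc (neg := neg) hN d : ℤ) + ec (neg := neg) hN d) = (K : ℤ) ^ i := by
  have hi0 : 0 < i := Nat.pos_of_dvd_of_pos hi hN
  rw [← fixed_card (neg := neg) hN i hi, sum_fixed_per _ i hi0.ne']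
  apply Finset.sum_congr rfl
  intro d _
  rw [sum_per hN d _ 1 1 (by intro w _; simp)]
  ring

lemma words_2 (hs : ∑ c, sg neg c = 0) (i : ℕ) (hi : i ∣ N) :
    ∑ d ∈ i.divisors, ((-1) ^ (i / d) * (oc (neg := neg) hN d : ℤ) + ec (neg := neg) hN d) = 0 := by
  have hi0 : 0 < i := Nat.pos_of_dvd_of_pos hi hN
  rw [← fixed_sign (neg := neg) hN hs i hi, sum_fixed_per _ i hi0.ne']
  apply Finset.sum_congr rfl
  intro d hd'
  rw [sum_per hN d _ ((-1) ^ (i / d)) 1, one_mul]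
  intro w hw
  have hfix : (shf hN ^ d) w = w := by
    rw [← perm_isPeriodicPt, isPeriodicPt_iff_minimalPeriod_dvd, hw]
  have : i = d * (i / d) := (Nat.mul_div_cancel' (Nat.dvd_of_mem_divisors hd')).symm
  conv_lhs => rw [this]
  rw [negc_mul _ _ _ _ _ _ hfix, mul_comm, pow_mul]
  unfold oddw
  rw [hw]
  split_ifs with h
  · rw [h.neg_one_pow]
  · rw [(Nat.not_odd_iff_even.1 h).neg_one_pow, one_pow]

lemma oc_half (i : ℕ) (hi : i ≠ 0) : (Finset.univ.filter fun w : Wd neg N =>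
    2 * minimalPeriod (shf hN) w = i ∧ oddw neg (shf hN) hd w).card =
    if 2 ∣ i then oc (neg := neg) hN (i / 2) else 0 := by
  split_ifs with h
  · unfold oc
    congr 1
    ext w
    simp only [Finset.mem_filter, Finset.mem_univ, true_and]
    have : 2 * minimalPeriod (shf hN) w = i ↔ minimalPeriod (shf hN) w = i / 2 := by omega
    rw [this]
  · rw [Finset.card_eq_zero, Finset.filter_eq_empty_iff]
    rintro w _ ⟨h1, _⟩
    exact h ⟨_, h1.symm⟩

lemma words_count (hs : ∑ c, sg neg c = 0) (i : ℕ) (hi : i ∣ N) (g : ℕ)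
    (hg : (2 * i : ℤ) * (g : ℤ) = ∑ d ∈ i.divisors.filter (fun d => Odd d),
            ArithmeticFunction.moebius d * (K : ℤ) ^ (i / d)) :
    (Finset.univ.filter fun w : Wd neg N =>
      minimalPeriod (shf hN) w = i ∧ oddw neg (shf hN) hd w).card = i * g ∧
    (Finset.univ.filter fun w : Wd neg N =>
      minimalPeriod (shf hN) w = i ∧ ¬ oddw neg (shf hN) hd w).card +
    2 * (Finset.univ.filter fun w : Wd neg N =>
      2 * minimalPeriod (shf hN) w = i ∧ oddw neg (shf hN) hd w).card = i * g := by
  have hi0 : 0 < i := Nat.pos_of_dvd_of_pos hi hN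
  have ha := arith_a _ _ K N hN (words_1 (neg := neg) hN) (words_2 (neg := neg) hN hs) i hi
  have hb := arith_b _ _ N hN (words_2 (neg := neg) hN hs) i hi
  rw [← hg] at ha
  have ha' : oc (neg := neg) hN i = i * g := by
    zify; linarith
  refine ⟨ha', ?_⟩
  rw [oc_half hN i hi0.ne']
  rw [← ha']
  change ec (neg := neg) hN i + _ = _
  have hc : ((ec (neg := neg) hN i + 2 * (if 2 ∣ i then oc (neg := neg) hN (i / 2) else 0) : ℕ) : ℤ) =
      (oc (neg := neg) hN i : ℕ) := by
    rw [← hb]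
    split_ifs <;> push_cast <;> rfl
  exact_mod_cast hc

end
end DFH

namespace DFH
open Function

lemma contrib_total (p M B : ℕ) (o : Prop) (hp : 0 < p) (hB : 2 * p < B) :
    ∑ i ∈ Finset.range B, contrib p M i o = M := by
  unfold contrib
  by_cases h : o
  · simp only [if_pos h, Finset.sum_add_distrib, Finset.sum_ite_eq, Finset.mem_range]
    rw [if_pos (by omega), if_pos hB]
    omega
  · simp only [if_neg h, Finset.sum_ite_eq, Finset.mem_range]
    rw [if_pos (by omega)]

lemma contrib_zero (p M : ℕ) (o : Prop) (hp : 0 < p) : contrib p M 0 o = 0 := by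
  unfold contrib
  rw [if_neg (by omega : ¬ p = 0), if_neg (by omega : ¬ 2 * p = 0), if_neg (by omega : ¬ p = 0)]
  simp

lemma sg_sum (k : ℕ) : ∑ c : Fin (2 * k), sg (fun c => Even c.val) c = 0 := by
  have h : ∑ c : Fin (2 * k), sg (fun c => Even c.val) c =
      ∑ c : Fin (2 * k), (fun c : ℕ => if Even c then (-1 : ℤ) else 1) c.val := by
    apply Finset.sum_congr rfl
    intro c _
    unfold sg
    by_cases hc : Even c.val <;> simp [hc]
  rw [h, Fin.sum_univ_eq_sum_range (fun c : ℕ => if Even c then (-1 : ℤ) else 1) (2 * k)]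
  clear h
  induction k with
  | zero => simp
  | succ k ih =>
    rw [Nat.mul_succ, Finset.sum_range_succ, Finset.sum_range_succ, ih]
    have h1 : Even (2 * k) := even_two_mul k
    have h2 : ¬ Even (2 * k + 1) := by simp
    rw [if_pos h1, if_neg h2]
    norm_num

section
variable {K : ℕ} {neg : Fin K → Prop} {n : ℕ} [Fintype (Wd neg n.factorial)]

lemma type_iff (m : ℕ → ℕ) (hm0 : m 0 = 0) (π : Equiv.Perm (Fin n)) (W : Fin n → Wd neg n.factorial)
    (hG : Good neg (shf n.factorial_pos) hd π W) :
    (∀ i, Multiset.count i (fullCycleType n π) = m i) ↔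
    ∀ i, 1 ≤ i → ∑ w, contrib (minimalPeriod (shf n.factorial_pos) w) (fib W w) i
      (oddw neg (shf n.factorial_pos) hd w) = i * m i := by
  constructor
  · intro h i hi
    rw [← hG.period_count, count_fullCycleType π i hi, h]
  · intro h i
    rcases Nat.eq_zero_or_pos i with rfl | hi
    · rw [hm0, count_zero_fullCycleType]
    · have := h i hi
      rw [← hG.period_count, count_fullCycleType π i hi] at this
      exact Nat.eq_of_mul_eq_mul_left hi this

lemma pairs_count (m : ℕ → ℕ) (hm0 : m 0 = 0) (hmhigh : ∀ i, n < i → m i = 0)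
    (hsum : ∑ i ∈ Finset.Icc 1 n, i * m i = n) :
    ∑ π ∈ (Finset.univ.filter fun π : Equiv.Perm (Fin n) =>
            ∀ i, Multiset.count i (fullCycleType n π) = m i),
      ((Finset.univ : Finset (Fin n → Fin K)).filter fun f => Compat neg π f).card =
    Nat.card {M : Wd neg n.factorial → ℕ // (∀ w, M (shf n.factorial_pos w) = M w) ∧
      ∀ i, 1 ≤ i → ∑ w, contrib (minimalPeriod (shf n.factorial_pos) w) (M w) i
        (oddw neg (shf n.factorial_pos) hd w) = i * m i} := by
  rw [← Finset.card_sigma, ← Fintype.card_coe, ← Nat.card_eq_fintype_card]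
  have hU := wd_univ (neg := neg) n.factorial_pos
  have hmem : ∀ p : (_ : Equiv.Perm (Fin n)) × (Fin n → Fin K),
      p ∈ ((Finset.univ.filter fun π : Equiv.Perm (Fin n) =>
            ∀ i, Multiset.count i (fullCycleType n π) = m i).sigma fun π =>
      ((Finset.univ : Finset (Fin n → Fin K)).filter fun f => Compat neg π f)) ↔
      (∀ i, Multiset.count i (fullCycleType n p.1) = m i) ∧ Compat neg p.1 p.2 := by
    intro p; simp
  apply Nat.card_eq_of_bijective (fun p => ⟨fib (mkW neg p.1.1 p.1.2),
    fun w => fib_inv (mkW_good _ _ ((hmem _).1 p.2).2).equi w,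
    (type_iff m hm0 _ _ (mkW_good _ _ ((hmem _).1 p.2).2)).1 ((hmem _).1 p.2).1⟩)
  constructor
  · rintro ⟨⟨π, f⟩, h⟩ ⟨⟨π', f'⟩, h'⟩ heq
    have heq := congrArg Subtype.val heq
    simp only at heq
    have hg := mkW_good _ _ ((hmem _).1 h).2
    have hg' := mkW_good _ _ ((hmem _).1 h').2
    simp only at hg hg'
    have hW : mkW neg π f = mkW neg π' f' :=
      mono_unique _ _ (hg.mono hU) (hg'.mono hU) (fun w => congrFun heq w)
    rw [← hW] at hg'
    have hπ : π = π' := hg.unique hU hg'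
    have hf : f = f' := by
      funext x
      have := congrArg hd (congrFun hW x)
      exact this
    subst hπ hf
    rfl
  · rintro ⟨M, hM, hM'⟩
    have hMn : ∑ w, M w = n := by
      let B := 2 * n.factorial + n + 1
      have h1 : ∀ w : Wd neg n.factorial, 2 * minimalPeriod (shf n.factorial_pos) w < B := by
        intro w
        have : minimalPeriod (shf n.factorial_pos) w ∣ n.factorial := by
          rw [← isPeriodicPt_iff_minimalPeriod_dvd, perm_isPeriodicPt]
          ext1
          funext j
          rw [shf_pow, w.2]
        have := Nat.le_of_dvd n.factorial_pos this
        omega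
      have h2 : ∀ w, M w = ∑ i ∈ Finset.range B, contrib (minimalPeriod (shf n.factorial_pos) w) (M w) i
        (oddw neg (shf n.factorial_pos) hd w) := by
        intro w
        rw [contrib_total _ _ _ _ (per_pos _ w) (h1 w)]
      rw [Finset.sum_congr rfl (fun w _ => h2 w), Finset.sum_comm]
      conv_rhs => rw [← hsum]
      symm
      apply Finset.sum_subset_zero_on_sdiff
      · intro i hi
        rw [Finset.mem_Icc] at hi
        rw [Finset.mem_range]; omega
      · intro i hi
        rw [Finset.mem_sdiff, Finset.mem_Icc] at hi
        rcases Nat.eq_zero_or_pos i with rfl | hi'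
        · exact Finset.sum_eq_zero (fun w _ => contrib_zero _ _ _ (per_pos _ w))
        · rw [hM' i hi', hmhigh i (by omega), mul_zero]
      · intro i hi
        rw [Finset.mem_Icc] at hi
        rw [hM' i hi.1]
    obtain ⟨W, hW, hWM⟩ := exists_mono M hMn
    have hWM' : fib W = M := funext hWM
    obtain ⟨π, hG⟩ := Good.exists hU W hW (by rw [hWM']; exact hM)
    refine ⟨⟨⟨π, fun x => hd (W x)⟩, (hmem _).2 ⟨?_, hG.compat⟩⟩, ?_⟩
    · rw [type_iff m hm0 π W hG, hWM']
      exact hM'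
    · apply Subtype.ext
      show fib (mkW neg π fun x => hd (W x)) = M
      rw [good_mkW π W hG, hWM']

end

lemma coeff_k (n : ℕ) (m : ℕ → ℕ) (hm0 : m 0 = 0) (hmhigh : ∀ i, n < i → m i = 0)
    (hsum : ∑ i ∈ Finset.Icc 1 n, i * m i = n) (k : ℕ) (g : ℕ → ℕ)
    (hg : ∀ i : ℕ, 1 ≤ i → (2 * i : ℤ) * (g i : ℤ)
        = ∑ d ∈ i.divisors.filter (fun d => Odd d),
            ArithmeticFunction.moebius d * (2 * k : ℤ) ^ (i / d)) :
    ∑ π ∈ (Finset.univ.filter fun π : Equiv.Perm (Fin n) =>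
            ∀ i, Multiset.count i (fullCycleType n π) = m i),
      (((Finset.univ : Finset (Fin n → Fin (2 * k))).filter
        fun f => Compat (fun c => Even c.val) π f).card : ℚ) =
    ∏ i ∈ (Finset.Icc 1 n).filter (fun i => 1 ≤ m i), Ncoef (g i) (m i) := by
  have hfin := wd_finite (neg := fun c : Fin (2 * k) => Even c.val) n.factorial_pos
  have := Fintype.ofFinite (Wd (fun c : Fin (2 * k) => Even c.val) n.factorial)
  have hwc : ∀ i, 1 ≤ i → m i ≠ 0 → _ := fun i hi hmi =>
    words_count (neg := fun c : Fin (2 * k) => Even c.val) n.factorial_pos (sg_sum k) i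
    (Nat.dvd_factorial hi (by by_contra h; exact hmi (hmhigh i (by omega)))) (g i)
    (by rw [hg i hi]; push_cast; rfl)
  rw [← Nat.cast_sum, pairs_count m hm0 hmhigh hsum, inv_count _ _ (oddw_inv _ _ _) m
    (2 * n.factorial + n + 1) _ _ hm0 g (fun i hi hmi => (hwc i hi hmi).1)
    (fun i hi hmi => (hwc i hi hmi).2)]
  · rw [Finset.prod_ite, Finset.prod_const_one, one_mul]
    apply Finset.prod_congr _ (fun _ _ => rfl)
    ext i
    simp only [Finset.mem_filter, Finset.mem_range, Finset.mem_Icc]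
    constructor
    · rintro ⟨_, h⟩
      have h1 : i ≠ 0 := by rintro rfl; exact h hm0
      have h2 : ¬ n < i := fun hh => h (hmhigh i hh)
      omega
    · intro h; omega
  · intro w
    have : minimalPeriod (shf n.factorial_pos) w ∣ n.factorial := by
      rw [← isPeriodicPt_iff_minimalPeriod_dvd, perm_isPeriodicPt]
      ext1
      funext j
      rw [shf_pow, w.2]
    have := Nat.le_of_dvd n.factorial_pos this
    omega
  · intro i hi
    exact hmhigh i (by omega)

end DFH

theorem stmt19 (n : ℕ) (hn : 1 ≤ n) (m : ℕ → ℕ)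
    (hm0 : m 0 = 0) (hmhigh : ∀ i, n < i → m i = 0)
    (hsum : ∑ i ∈ Finset.Icc 1 n, i * m i = n)
    (g : ℕ → ℕ → ℕ)
    (hg : ∀ i : ℕ, 1 ≤ i → ∀ k : ℕ,
      (2 * i : ℤ) * (g i k : ℤ)
        = ∑ d ∈ i.divisors.filter (fun d => Odd d),
            ArithmeticFunction.moebius d * (2 * k : ℤ) ^ (i / d)) :
    PowerSeries.C (R := ℚ) (1 / 2)
        * ∑ π ∈ (Finset.univ.filter fun π : Equiv.Perm (Fin n) =>
            ∀ i, Multiset.count i (fullCycleType n π) = m i),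
            (4 : PowerSeries ℚ) ^ (pk n π + 1) * PowerSeries.X ^ (pk n π + 1)
              * (1 + PowerSeries.X) ^ (n - 1 - 2 * pk n π)
      = (1 - PowerSeries.X) ^ (n + 1)
          * PowerSeries.mk (fun k =>
              ∏ i ∈ (Finset.Icc 1 n).filter (fun i => 1 ≤ m i),
                Ncoef (g i k) (m i)) := by
  rw [Finset.mul_sum]
  have h1 : ∀ π ∈ (Finset.univ.filter fun π : Equiv.Perm (Fin n) =>
            ∀ i, Multiset.count i (fullCycleType n π) = m i), _ :=
    fun π _ => DFH.partA n hn π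
  rw [Finset.sum_congr rfl h1, ← Finset.mul_sum]
  congr 1
  ext k
  rw [map_sum]
  simp only [PowerSeries.coeff_mk]
  exact DFH.coeff_k n m hm0 hmhigh hsum k (fun i => g i k) (fun i hi => hg i hi k)

end
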